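/- arXiv:1903.05340 — 8 statements merged into one kernel-verified Lean document; each statement's English description precedes it below -/
import Mathlib

section
/- Let N ∈ {1,2,3} and let λ₁, λ₂ > 0 with λ₁ ≠ λ₂. Let w₁, w₂ : ℝ^N → ℝ be continuous functions with radial decay of rates √λ₁ and √λ₂ respectively. Then there exist constants c, C, R₀ > 0 such that for all R ≥ R₀, c·R^{1−N}·e^{−2·min(√λ₁,√λ₂)·R} ≤ ∫_{ℝ^N} w₁(x)²·w₂(x − R·e₁)² dx ≤ C·R^{1−N}·e^{−2·min(√λ₁,√λ₂)·R}. -/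
open MeasureTheory Real

/-- A continuous function `w : ℝ^N → ℝ` has radial decay of rate `√lam`:
`w` is everywhere positive and there are `M, c, C > 0` with
`c‖x‖^{-(N-1)/2} e^{-√lam ‖x‖} ≤ w x ≤ C‖x‖^{-(N-1)/2} e^{-√lam ‖x‖}` for `‖x‖ ≥ M`. -/
def HasRadialDecay {N : ℕ} (w : EuclideanSpace ℝ (Fin N) → ℝ) (lam : ℝ) : Prop :=
  (∀ x, 0 < w x) ∧
  ∃ M c C : ℝ, 0 < M ∧ 0 < c ∧ 0 < C ∧
    ∀ x : EuclideanSpace ℝ (Fin N), M ≤ ‖x‖ →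
      c * ‖x‖ ^ (-((N : ℝ) - 1) / 2) * Real.exp (-Real.sqrt lam * ‖x‖) ≤ w x ∧
      w x ≤ C * ‖x‖ ^ (-((N : ℝ) - 1) / 2) * Real.exp (-Real.sqrt lam * ‖x‖)

lemma ied_sq_rpow (k : ℕ) (t a : ℝ) (c : ℝ) (ht : 0 < t) :
    (c * t ^ (-(((k + 1 : ℕ) : ℝ) - 1) / 2) * Real.exp (-a * t)) ^ 2
      = c ^ 2 * (t ^ k)⁻¹ * Real.exp (-2 * a * t) := by
  have h1 : (t ^ (-(((k + 1 : ℕ) : ℝ) - 1) / 2)) ^ 2 = (t ^ k)⁻¹ := by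
    rw [← Real.rpow_natCast, ← Real.rpow_mul ht.le, ← Real.rpow_natCast, ← Real.rpow_neg ht.le]
    congr 1
    push_cast
    ring
  have h2 : (Real.exp (-a * t)) ^ 2 = Real.exp (-2 * a * t) := by
    rw [← Real.exp_nat_mul]
    congr 1
    push_cast
    ring
  rw [mul_pow, mul_pow, h1, h2]

lemma ied_upper (k : ℕ) (lam : ℝ) (w : EuclideanSpace ℝ (Fin (k + 1)) → ℝ)
    (hc : Continuous w) (hw : HasRadialDecay w lam) :
    ∃ C : ℝ, 0 < C ∧ ∀ x, (w x) ^ 2 ≤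
      C * ((1 + ‖x‖) ^ k)⁻¹ * Real.exp (-2 * Real.sqrt lam * ‖x‖) := by
  obtain ⟨hpos, M, c, C, hM, -, hC, hb⟩ := hw
  have hcont : Continuous (fun x : EuclideanSpace ℝ (Fin (k + 1)) =>
      (w x) ^ 2 * (1 + ‖x‖) ^ k * Real.exp (2 * Real.sqrt lam * ‖x‖)) := by fun_prop
  obtain ⟨B, hB⟩ := (isCompact_closedBall (0 : EuclideanSpace ℝ (Fin (k + 1))) M).bddAbove_image
    hcont.continuousOn
  have hB' : ∀ x : EuclideanSpace ℝ (Fin (k + 1)), ‖x‖ ≤ M →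
      (w x) ^ 2 * (1 + ‖x‖) ^ k * Real.exp (2 * Real.sqrt lam * ‖x‖) ≤ B := by
    intro x hx
    apply hB
    exact ⟨x, by simpa using hx, rfl⟩
  refine ⟨max B (C ^ 2 * (1 + 1 / M) ^ k), lt_max_of_lt_right (by positivity), fun x => ?_⟩
  have key : (w x) ^ 2 * (1 + ‖x‖) ^ k * Real.exp (2 * Real.sqrt lam * ‖x‖)
      ≤ max B (C ^ 2 * (1 + 1 / M) ^ k) := by
    rcases le_total ‖x‖ M with h | h
    · exact (hB' x h).trans (le_max_left _ _)
    · refine le_trans ?_ (le_max_right _ _)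
      have hx0 : 0 < ‖x‖ := hM.trans_le h
      have h1 : (w x) ^ 2 ≤ C ^ 2 * (‖x‖ ^ k)⁻¹ * Real.exp (-2 * Real.sqrt lam * ‖x‖) := by
        rw [← ied_sq_rpow k _ _ _ hx0]
        exact pow_le_pow_left₀ (hpos x).le (hb x h).2 2
      have h2 : (1 + ‖x‖) ^ k ≤ (1 + 1 / M) ^ k * ‖x‖ ^ k := by
        rw [← mul_pow]
        apply pow_le_pow_left₀ (by positivity)
        have : 1 ≤ 1 / M * ‖x‖ := by
          rw [one_div, inv_mul_eq_div, one_le_div hM]; exact h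
        linarith
      calc (w x) ^ 2 * (1 + ‖x‖) ^ k * Real.exp (2 * Real.sqrt lam * ‖x‖)
          ≤ (C ^ 2 * (‖x‖ ^ k)⁻¹ * Real.exp (-2 * Real.sqrt lam * ‖x‖)) *
            ((1 + 1 / M) ^ k * ‖x‖ ^ k) * Real.exp (2 * Real.sqrt lam * ‖x‖) := by gcongr
        _ = C ^ 2 * (1 + 1 / M) ^ k * ((‖x‖ ^ k)⁻¹ * ‖x‖ ^ k) *
            (Real.exp (-2 * Real.sqrt lam * ‖x‖) * Real.exp (2 * Real.sqrt lam * ‖x‖)) := by ring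
        _ = C ^ 2 * (1 + 1 / M) ^ k := by
            rw [← Real.exp_add, inv_mul_cancel₀ (by positivity)]
            ring_nf
            simp
  have hp : 0 < (1 + ‖x‖) ^ k := by positivity
  have he : Real.exp (-2 * Real.sqrt lam * ‖x‖) = (Real.exp (2 * Real.sqrt lam * ‖x‖))⁻¹ := by
    rw [← Real.exp_neg]; congr 1; ring
  rw [he, ← div_eq_mul_inv, ← div_eq_mul_inv, le_div_iff₀ (by positivity), le_div_iff₀ hp]
  linarith

lemma ied_lower (k : ℕ) (lam : ℝ) (w : EuclideanSpace ℝ (Fin (k + 1)) → ℝ)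
    (hw : HasRadialDecay w lam) :
    ∃ c M : ℝ, 0 < c ∧ 0 < M ∧ ∀ x, M ≤ ‖x‖ →
      c * (‖x‖ ^ k)⁻¹ * Real.exp (-2 * Real.sqrt lam * ‖x‖) ≤ (w x) ^ 2 := by
  obtain ⟨hpos, M, c, C, hM, hc, hC, hb⟩ := hw
  refine ⟨c ^ 2, M, by positivity, hM, fun x hx => ?_⟩
  rw [← ied_sq_rpow k _ _ _ (hM.trans_le hx)]
  exact pow_le_pow_left₀ (by positivity) (hb x hx).1 2

lemma ied_integrable (k : ℕ) (d : ℝ) (hd : 0 < d) :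
    Integrable (fun y : EuclideanSpace ℝ (Fin (k + 1)) =>
      (1 + ‖y‖) ^ k * Real.exp (-d * ‖y‖)) := by
  have h0 : Integrable (fun y : EuclideanSpace ℝ (Fin (k + 1)) =>
      (1 + ‖y‖) ^ (-((k + 2 : ℕ) : ℝ))) := by
    apply integrable_one_add_norm
    simp
  set n := 2 * k + 2
  refine (h0.const_mul ((n.factorial : ℝ) / d ^ n * Real.exp d)).mono' (by fun_prop) ?_
  refine Filter.Eventually.of_forall fun y => ?_
  have hy : 0 < 1 + ‖y‖ := by positivity
  rw [Real.norm_of_nonneg (by positivity), Real.rpow_neg hy.le, Real.rpow_natCast]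
  have h := Real.pow_div_factorial_le_exp (d * (1 + ‖y‖)) (by positivity) n
  have he : Real.exp (-d * ‖y‖) = Real.exp d * (Real.exp (d * (1 + ‖y‖)))⁻¹ := by
    rw [← Real.exp_neg, ← Real.exp_add]; congr 1; ring
  rw [he, ← div_eq_mul_inv, ← div_eq_mul_inv, le_div_iff₀ (by positivity), mul_comm_div,
    ← mul_div_assoc] 
  have hE := Real.exp_pos (d * (1 + ‖y‖))
  have hn : (0:ℝ) < n.factorial := by positivity
  rw [div_le_iff₀ hn, mul_pow] at h
  have h3 : (1 + ‖y‖) ^ n = (1 + ‖y‖) ^ k * (1 + ‖y‖) ^ (k + 2) := by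
    rw [← pow_add]; congr 1; omega
  rw [h3] at h
  have h4 : (1 + ‖y‖) ^ k * (1 + ‖y‖) ^ (k + 2) / Real.exp (d * (1 + ‖y‖))
      ≤ (n.factorial : ℝ) / d ^ n := by
    rw [div_le_div_iff₀ hE (by positivity)]
    linarith
  have h5 := mul_le_mul_of_nonneg_right h4 (Real.exp_pos d).le
  refine le_trans (le_of_eq ?_) (h5.trans (le_of_eq ?_)) <;> ring

set_option maxHeartbeats 1000000 in
lemma ied_main (k : ℕ) (lam₁ lam₂ : ℝ) (h1 : 0 < lam₁) (hlt : lam₁ < lam₂)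
    (w₁ w₂ : EuclideanSpace ℝ (Fin (k + 1)) → ℝ)
    (hw₁c : Continuous w₁) (hw₂c : Continuous w₂)
    (hw₁ : HasRadialDecay w₁ lam₁) (hw₂ : HasRadialDecay w₂ lam₂)
    (e : EuclideanSpace ℝ (Fin (k + 1))) (he : ‖e‖ = 1) :
    ∃ c C R₀ : ℝ, 0 < c ∧ 0 < C ∧ 0 < R₀ ∧
      ∀ R : ℝ, R₀ ≤ R →
        c * (R ^ k)⁻¹ * Real.exp (-2 * Real.sqrt lam₁ * R)
            ≤ (∫ y, (w₁ (y + R • e)) ^ 2 * (w₂ y) ^ 2) ∧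
        (∫ y, (w₁ (y + R • e)) ^ 2 * (w₂ y) ^ 2)
            ≤ C * (R ^ k)⁻¹ * Real.exp (-2 * Real.sqrt lam₁ * R) := by
  obtain ⟨C₁, hC₁, hu₁⟩ := ied_upper k lam₁ w₁ hw₁c hw₁
  obtain ⟨C₂, hC₂, hu₂⟩ := ied_upper k lam₂ w₂ hw₂c hw₂
  obtain ⟨c₁, M, hc₁, hM, hl₁⟩ := ied_lower k lam₁ w₁ hw₁
  have hs : Real.sqrt lam₁ < Real.sqrt lam₂ := Real.sqrt_lt_sqrt h1.le hlt
  set a := Real.sqrt lam₁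
  set b := Real.sqrt lam₂
  have ha : 0 ≤ a := Real.sqrt_nonneg _
  have hint := ied_integrable k (2 * (b - a)) (by linarith)
  set G : EuclideanSpace ℝ (Fin (k + 1)) → ℝ :=
    fun y => (1 + ‖y‖) ^ k * Real.exp (-(2 * (b - a)) * ‖y‖) with hG
  have hG0 : 0 ≤ ∫ y, G y := integral_nonneg fun y => by positivity
  set S : Set (EuclideanSpace ℝ (Fin (k + 1))) := Metric.closedBall 0 1
  have hSm : MeasurableSet S := measurableSet_closedBall
  have hw2S : IntegrableOn (fun y => (w₂ y) ^ 2) S :=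
    (hw₂c.pow 2).continuousOn.integrableOn_compact (isCompact_closedBall _ _)
  have hIpos : 0 < ∫ y in S, (w₂ y) ^ 2 := by
    rw [setIntegral_pos_iff_support_of_nonneg_ae
      (Filter.Eventually.of_forall fun y => sq_nonneg _) hw2S]
    have : Function.support (fun y => (w₂ y) ^ 2) = Set.univ := by
      ext y; simp [(hw₂.1 y).ne']
    rw [this, Set.univ_inter]
    exact Metric.measure_closedBall_pos _ _ one_pos
  have hpt : ∀ R : ℝ, 0 < R → ∀ y, (w₁ (y + R • e)) ^ 2 * (w₂ y) ^ 2 ≤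
      C₁ * C₂ * (R ^ k)⁻¹ * Real.exp (-2 * a * R) * G y := by
    intro R hR y
    have hRn : ‖R • e‖ = R := by rw [norm_smul, he, Real.norm_of_nonneg hR.le, mul_one]
    have htri : R ≤ ‖y + R • e‖ + ‖y‖ := by
      have := norm_sub_le (y + R • e) y
      rw [add_sub_cancel_left, hRn] at this
      exact this
    set z := ‖y + R • e‖
    have hz : 0 ≤ z := norm_nonneg _
    have hp : ((1 + z) ^ k)⁻¹ ≤ (R ^ k)⁻¹ * (1 + ‖y‖) ^ k := by
      rw [inv_mul_eq_div, ← one_div, div_le_div_iff₀ (by positivity) (by positivity), one_mul,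
        ← mul_pow]
      apply pow_le_pow_left₀ hR.le
      nlinarith [norm_nonneg y]
    have hq : ((1 + ‖y‖) ^ k)⁻¹ ≤ 1 := by
      apply inv_le_one_of_one_le₀
      apply one_le_pow₀
      linarith [norm_nonneg y]
    have hee : Real.exp (-2 * a * z) ≤ Real.exp (-2 * a * R) * Real.exp (2 * a * ‖y‖) := by
      rw [← Real.exp_add]
      apply Real.exp_le_exp.2
      nlinarith
    calc (w₁ (y + R • e)) ^ 2 * (w₂ y) ^ 2
        ≤ (C₁ * ((1 + z) ^ k)⁻¹ * Real.exp (-2 * a * z)) *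
          (C₂ * ((1 + ‖y‖) ^ k)⁻¹ * Real.exp (-2 * b * ‖y‖)) := by
          gcongr
          · exact hu₁ _
          · exact hu₂ _
      _ ≤ (C₁ * ((R ^ k)⁻¹ * (1 + ‖y‖) ^ k) * (Real.exp (-2 * a * R) * Real.exp (2 * a * ‖y‖))) *
          (C₂ * 1 * Real.exp (-2 * b * ‖y‖)) := by gcongr
      _ = C₁ * C₂ * (R ^ k)⁻¹ * Real.exp (-2 * a * R) * ((1 + ‖y‖) ^ k *
          (Real.exp (2 * a * ‖y‖) * Real.exp (-2 * b * ‖y‖))) := by ring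
      _ = C₁ * C₂ * (R ^ k)⁻¹ * Real.exp (-2 * a * R) * G y := by
          rw [← Real.exp_add, hG]
          congr 3
          ring
  have hintf : ∀ R : ℝ, 0 < R → Integrable (fun y => (w₁ (y + R • e)) ^ 2 * (w₂ y) ^ 2) := by
    intro R hR
    refine (hint.const_mul (C₁ * C₂ * (R ^ k)⁻¹ * Real.exp (-2 * a * R))).mono'
      (Continuous.aestronglyMeasurable (by fun_prop)) ?_
    refine Filter.Eventually.of_forall fun y => ?_
    rw [Real.norm_of_nonneg (by positivity)]
    exact hpt R hR y
  refine ⟨c₁ * (2 ^ k)⁻¹ * Real.exp (-2 * a) * ∫ y in S, (w₂ y) ^ 2, C₁ * C₂ * ((∫ y, G y) + 1),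
    M + 1, mul_pos (by positivity) hIpos,
    mul_pos (mul_pos hC₁ hC₂) (by linarith), by linarith, fun R hR => ⟨?_, ?_⟩⟩
  · have hR0 : 0 < R := by linarith
    have hRn : ‖R • e‖ = R := by rw [norm_smul, he, Real.norm_of_nonneg hR0.le, mul_one]
    calc c₁ * (2 ^ k)⁻¹ * Real.exp (-2 * a) * (∫ y in S, (w₂ y) ^ 2) * (R ^ k)⁻¹ *
          Real.exp (-2 * a * R)
        = ∫ y in S, (c₁ * (2 ^ k)⁻¹ * Real.exp (-2 * a) * (R ^ k)⁻¹ *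
          Real.exp (-2 * a * R)) * (w₂ y) ^ 2 := by
          rw [integral_const_mul]; ring
      _ ≤ ∫ y in S, (w₁ (y + R • e)) ^ 2 * (w₂ y) ^ 2 := by
          apply setIntegral_mono_on (hw2S.const_mul _) (hintf R hR0).integrableOn hSm
          intro y hy
          have hy1 : ‖y‖ ≤ 1 := by simpa [S] using hy
          apply mul_le_mul_of_nonneg_right _ (sq_nonneg _)
          have hlo : R ≤ ‖y + R • e‖ + ‖y‖ := by
            have := norm_sub_le (y + R • e) y
            rw [add_sub_cancel_left, hRn] at this
            exact this
          have hhi : ‖y + R • e‖ ≤ ‖y‖ + R := by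
            have := norm_add_le y (R • e)
            rwa [hRn] at this
          refine le_trans ?_ (hl₁ _ (by linarith))
          set z := ‖y + R • e‖
          have hz : 0 < z := by linarith
          have hp : (2 ^ k)⁻¹ * (R ^ k)⁻¹ ≤ (z ^ k)⁻¹ := by
            rw [← mul_inv, ← mul_pow]
            gcongr
            linarith
          have hee : Real.exp (-2 * a) * Real.exp (-2 * a * R) ≤ Real.exp (-2 * a * z) := by
            rw [← Real.exp_add]
            apply Real.exp_le_exp.2
            nlinarith
          calc c₁ * (2 ^ k)⁻¹ * Real.exp (-2 * a) * (R ^ k)⁻¹ * Real.exp (-2 * a * R)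
              = c₁ * ((2 ^ k)⁻¹ * (R ^ k)⁻¹) * (Real.exp (-2 * a) * Real.exp (-2 * a * R)) := by
                ring
            _ ≤ _ := by gcongr
      _ ≤ _ := setIntegral_le_integral (hintf R hR0)
          (Filter.Eventually.of_forall fun y => by positivity)
  · have hR0 : 0 < R := by linarith
    calc (∫ y, (w₁ (y + R • e)) ^ 2 * (w₂ y) ^ 2)
        ≤ ∫ y, C₁ * C₂ * (R ^ k)⁻¹ * Real.exp (-2 * a * R) * G y :=
          integral_mono (hintf R hR0) (hint.const_mul _) (hpt R hR0)
      _ = C₁ * C₂ * (R ^ k)⁻¹ * Real.exp (-2 * a * R) * ∫ y, G y := integral_const_mul _ _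
      _ ≤ C₁ * C₂ * (R ^ k)⁻¹ * Real.exp (-2 * a * R) * ((∫ y, G y) + 1) := by
          gcongr
          linarith
      _ = _ := by ring

theorem interaction_estimate_distinct_rates
    (N : ℕ) (hN : N = 1 ∨ N = 2 ∨ N = 3)
    (lam₁ lam₂ : ℝ) (hlam₁ : 0 < lam₁) (hlam₂ : 0 < lam₂) (hne : lam₁ ≠ lam₂)
    (w₁ w₂ : EuclideanSpace ℝ (Fin N) → ℝ)
    (hw₁c : Continuous w₁) (hw₂c : Continuous w₂)
    (hw₁ : HasRadialDecay w₁ lam₁) (hw₂ : HasRadialDecay w₂ lam₂)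
    (e₁ : EuclideanSpace ℝ (Fin N)) (he₁ : ‖e₁‖ = 1) :
    ∃ c C R₀ : ℝ, 0 < c ∧ 0 < C ∧ 0 < R₀ ∧
      ∀ R : ℝ, R₀ ≤ R →
        c * R ^ ((1 : ℝ) - (N : ℝ)) *
            Real.exp (-2 * min (Real.sqrt lam₁) (Real.sqrt lam₂) * R)
            ≤ (∫ x, (w₁ x) ^ 2 * (w₂ (x - R • e₁)) ^ 2) ∧
        (∫ x, (w₁ x) ^ 2 * (w₂ (x - R • e₁)) ^ 2)
            ≤ C * R ^ ((1 : ℝ) - (N : ℝ)) *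
                Real.exp (-2 * min (Real.sqrt lam₁) (Real.sqrt lam₂) * R) := by
  obtain ⟨k, rfl⟩ : ∃ k, N = k + 1 := ⟨N - 1, by omega⟩
  have hpow : ∀ R : ℝ, 0 < R → R ^ ((1 : ℝ) - ((k + 1 : ℕ) : ℝ)) = (R ^ k)⁻¹ := by
    intro R hR
    rw [← Real.rpow_natCast R k, ← Real.rpow_neg hR.le]
    congr 1
    push_cast
    ring
  rcases lt_or_gt_of_ne hne with h | h
  · obtain ⟨c, C, R₀, hc, hC, hR₀, H⟩ :=
      ied_main k lam₁ lam₂ hlam₁ h w₁ w₂ hw₁c hw₂c hw₁ hw₂ e₁ he₁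
    refine ⟨c, C, R₀, hc, hC, hR₀, fun R hR => ?_⟩
    have hI : (∫ x, (w₁ x) ^ 2 * (w₂ (x - R • e₁)) ^ 2)
        = ∫ y, (w₁ (y + R • e₁)) ^ 2 * (w₂ y) ^ 2 := by
      rw [← integral_add_right_eq_self (fun x => (w₁ x) ^ 2 * (w₂ (x - R • e₁)) ^ 2) (R • e₁)]
      simp only [add_sub_cancel_right]
    rw [hI, hpow R (by linarith), min_eq_left (Real.sqrt_le_sqrt h.le)]
    exact H R hR
  · obtain ⟨c, C, R₀, hc, hC, hR₀, H⟩ :=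
      ied_main k lam₂ lam₁ hlam₂ h w₂ w₁ hw₂c hw₁c hw₂ hw₁ (-e₁) (by rwa [norm_neg])
    refine ⟨c, C, R₀, hc, hC, hR₀, fun R hR => ?_⟩
    have hI : (∫ x, (w₁ x) ^ 2 * (w₂ (x - R • e₁)) ^ 2)
        = ∫ y, (w₂ (y + R • (-e₁))) ^ 2 * (w₁ y) ^ 2 := by
      congr 1
      ext x
      rw [smul_neg, ← sub_eq_add_neg, mul_comm]
    rw [hI, hpow R (by linarith), min_eq_right (Real.sqrt_le_sqrt h.le)]
    exact H R hR
end

section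
/- Let N = 1 and λ > 0. Let w₁, w₂ : ℝ → ℝ be continuous functions, each with radial decay of rate √λ. Then there exist constants c, C, R₀ > 0 such that for all R ≥ R₀, c·R·e^{−2√λ·R} ≤ ∫_ℝ w₁(x)²·w₂(x − R)² dx ≤ C·R·e^{−2√λ·R}. -/
open MeasureTheory Real

/-- A continuous function `w : ℝ → ℝ` has radial decay of rate `√lam`:
`w` is everywhere positive and there are `M, c, C > 0` with
`c e^{-√lam |x|} ≤ w x ≤ C e^{-√lam |x|}` for `|x| ≥ M`. -/
def HasRadialDecay1D (w : ℝ → ℝ) (lam : ℝ) : Prop :=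
  (∀ x, 0 < w x) ∧
  ∃ M c C : ℝ, 0 < M ∧ 0 < c ∧ 0 < C ∧
    ∀ x : ℝ, M ≤ |x| →
      c * Real.exp (-Real.sqrt lam * |x|) ≤ w x ∧
      w x ≤ C * Real.exp (-Real.sqrt lam * |x|)


lemma decay_global (w : ℝ → ℝ) (lam : ℝ) (hc : Continuous w) (h : HasRadialDecay1D w lam) :
    ∃ a b : ℝ, 0 < a ∧ 0 < b ∧ ∀ x, a * Real.exp (-Real.sqrt lam * |x|) ≤ w x ∧
      w x ≤ b * Real.exp (-Real.sqrt lam * |x|) := by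
  obtain ⟨hp, M, c, C, hM, hc0, hC0, hb⟩ := h
  have hf : Continuous (fun x => w x * Real.exp (Real.sqrt lam * |x|)) := by fun_prop
  have hne : (Set.Icc (-M) M).Nonempty := ⟨0, by constructor <;> linarith⟩
  obtain ⟨u, -, hu⟩ := isCompact_Icc.exists_isMinOn hne hf.continuousOn
  obtain ⟨v, -, hv⟩ := isCompact_Icc.exists_isMaxOn hne hf.continuousOn
  have hu0 : 0 < w u * Real.exp (Real.sqrt lam * |u|) := mul_pos (hp u) (exp_pos _)
  refine ⟨min c (w u * Real.exp (Real.sqrt lam * |u|)),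
    max C (w v * Real.exp (Real.sqrt lam * |v|)), lt_min hc0 hu0, lt_max_of_lt_left hC0, ?_⟩
  intro x
  have he := exp_pos (-Real.sqrt lam * |x|)
  rcases le_total M |x| with hx | hx
  · obtain ⟨h1, h2⟩ := hb x hx
    exact ⟨le_trans (mul_le_mul_of_nonneg_right (min_le_left _ _) he.le) h1,
      le_trans h2 (mul_le_mul_of_nonneg_right (le_max_left _ _) he.le)⟩
  · have hxm : x ∈ Set.Icc (-M) M := abs_le.mp hx
    have h1 : w u * Real.exp (Real.sqrt lam * |u|) ≤ w x * Real.exp (Real.sqrt lam * |x|) := hu hxm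
    have h2 : w x * Real.exp (Real.sqrt lam * |x|) ≤ w v * Real.exp (Real.sqrt lam * |v|) := hv hxm
    have hx1 : w x * Real.exp (Real.sqrt lam * |x|) * Real.exp (-Real.sqrt lam * |x|) = w x := by
      rw [mul_assoc, ← Real.exp_add]; simp
    constructor
    · calc _ ≤ w x * Real.exp (Real.sqrt lam * |x|) * Real.exp (-Real.sqrt lam * |x|) :=
            mul_le_mul_of_nonneg_right ((min_le_right _ _).trans h1) he.le
        _ = _ := hx1
    · calc w x = w x * Real.exp (Real.sqrt lam * |x|) * Real.exp (-Real.sqrt lam * |x|) := hx1.symm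
        _ ≤ _ := mul_le_mul_of_nonneg_right (h2.trans (le_max_right _ _)) he.le

lemma integrable_exp_abs_aux (k : ℝ) (hk : 0 < k) :
    Integrable (fun x : ℝ => Real.exp (-k * |x|)) := by
  rw [← integrableOn_univ, ← Set.Iic_union_Ioi (a := (0:ℝ))]
  refine IntegrableOn.union ?_ ?_
  · refine (integrableOn_exp_mul_Iic hk 0).congr_fun ?_ measurableSet_Iic
    intro x hx
    simp only [Set.mem_Iic] at hx
    simp [abs_of_nonpos hx]
  · refine (exp_neg_integrableOn_Ioi 0 hk).congr_fun ?_ measurableSet_Ioi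
    intro x hx
    simp only [Set.mem_Ioi] at hx
    simp [abs_of_pos hx]

theorem interaction_estimate_equal_rates_dim_one
    (lam : ℝ) (hlam : 0 < lam)
    (w₁ w₂ : ℝ → ℝ) (hw₁c : Continuous w₁) (hw₂c : Continuous w₂)
    (hw₁ : HasRadialDecay1D w₁ lam) (hw₂ : HasRadialDecay1D w₂ lam) :
    ∃ c C R₀ : ℝ, 0 < c ∧ 0 < C ∧ 0 < R₀ ∧
      ∀ R : ℝ, R₀ ≤ R →
        c * R * Real.exp (-2 * Real.sqrt lam * R)
            ≤ (∫ x : ℝ, (w₁ x) ^ 2 * (w₂ (x - R)) ^ 2) ∧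
        (∫ x : ℝ, (w₁ x) ^ 2 * (w₂ (x - R)) ^ 2)
            ≤ C * R * Real.exp (-2 * Real.sqrt lam * R) := by
  obtain ⟨a, b, ha, hb, h1⟩ := decay_global w₁ lam hw₁c hw₁
  obtain ⟨a', b', ha', hb', h2⟩ := decay_global w₂ lam hw₂c hw₂
  have hp1 := hw₁.1
  have hp2 := hw₂.1
  have hs : 0 < Real.sqrt lam := Real.sqrt_pos.mpr hlam
  set s := Real.sqrt lam with hsdef
  have hI := integrable_exp_abs_aux (4 * s) (by positivity)
  set K := ∫ x : ℝ, Real.exp (-(4 * s) * |x|) with hK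
  have hK0 : 0 ≤ K := integral_nonneg fun x => (exp_pos _).le
  refine ⟨a ^ 2 * a' ^ 2, b ^ 2 * b' ^ 2 * (1 + 2 * K), 1, by positivity, by positivity,
    one_pos, ?_⟩
  intro R hR
  have hI' : Integrable (fun x : ℝ => Real.exp (-(4 * s) * |x - R|)) := hI.comp_sub_right R
  have hKR : ∫ x : ℝ, Real.exp (-(4 * s) * |x - R|) = K :=
    integral_sub_right_eq_self (fun x : ℝ => Real.exp (-(4 * s) * |x|)) R
  have hind : Integrable ((Set.Icc 0 R).indicator (fun _ : ℝ => (1:ℝ))) :=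
    (integrable_indicator_iff measurableSet_Icc).mpr (by simp)
  have hindI : ∫ x, (Set.Icc 0 R).indicator (fun _ : ℝ => (1:ℝ)) x = R := by
    rw [integral_indicator measurableSet_Icc]
    simp; linarith
  -- comparison with exponentials
  have hlow : ∀ x, a ^ 2 * a' ^ 2 * Real.exp (-(2 * s) * (|x| + |x - R|))
      ≤ (w₁ x) ^ 2 * (w₂ (x - R)) ^ 2 := by
    intro x
    have e : a ^ 2 * a' ^ 2 * Real.exp (-(2 * s) * (|x| + |x - R|)) =
        (a * Real.exp (-s * |x|)) ^ 2 * (a' * Real.exp (-s * |x - R|)) ^ 2 := by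
      rw [mul_pow, mul_pow, ← Real.exp_nat_mul, ← Real.exp_nat_mul, mul_mul_mul_comm,
        ← Real.exp_add]
      congr 2; push_cast; ring
    rw [e]
    have := (h1 x).1
    have := (h2 (x - R)).1
    gcongr
  have hup : ∀ x, (w₁ x) ^ 2 * (w₂ (x - R)) ^ 2 ≤
      b ^ 2 * b' ^ 2 * Real.exp (-(2 * s) * (|x| + |x - R|)) := by
    intro x
    have e : b ^ 2 * b' ^ 2 * Real.exp (-(2 * s) * (|x| + |x - R|)) =
        (b * Real.exp (-s * |x|)) ^ 2 * (b' * Real.exp (-s * |x - R|)) ^ 2 := by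
      rw [mul_pow, mul_pow, ← Real.exp_nat_mul, ← Real.exp_nat_mul, mul_mul_mul_comm,
        ← Real.exp_add]
      congr 2; push_cast; ring
    rw [e]
    have := (h1 x).2
    have := (h2 (x - R)).2
    have := (hp1 x).le
    have := (hp2 (x - R)).le
    gcongr
  have hdom : ∀ x, Real.exp (-(2 * s) * (|x| + |x - R|)) ≤ Real.exp (-2 * s * R) *
      ((Set.Icc 0 R).indicator (fun _ : ℝ => (1:ℝ)) x + Real.exp (-(4 * s) * |x|)
        + Real.exp (-(4 * s) * |x - R|)) := by
    intro x
    have p1 := exp_pos (-(4 * s) * |x|)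
    have p2 := exp_pos (-(4 * s) * |x - R|)
    have p0 := exp_pos (-2 * s * R)
    have pi : 0 ≤ (Set.Icc 0 R).indicator (fun _ : ℝ => (1:ℝ)) x :=
      Set.indicator_nonneg (fun _ _ => zero_le_one) x
    rcases lt_or_ge x 0 with hx | hx
    · have : Real.exp (-(2 * s) * (|x| + |x - R|)) =
          Real.exp (-2 * s * R) * Real.exp (-(4 * s) * |x|) := by
        rw [← Real.exp_add, abs_of_neg hx, abs_of_neg (by linarith : x - R < 0)]
        congr 1; ring
      rw [this]; gcongr; linarith
    · rcases le_or_gt x R with hx' | hx'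
      · have : Real.exp (-(2 * s) * (|x| + |x - R|)) = Real.exp (-2 * s * R) * 1 := by
          rw [abs_of_nonneg hx, abs_of_nonpos (by linarith : x - R ≤ 0), mul_one]
          congr 1; ring
        rw [this, Set.indicator_of_mem (show x ∈ Set.Icc 0 R from ⟨hx, hx'⟩)]
        gcongr; linarith
      · have : Real.exp (-(2 * s) * (|x| + |x - R|)) =
            Real.exp (-2 * s * R) * Real.exp (-(4 * s) * |x - R|) := by
          rw [← Real.exp_add, abs_of_nonneg hx, abs_of_pos (by linarith : 0 < x - R)]
          congr 1; ring
        rw [this]; gcongr; linarith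
  have hDint : Integrable (fun x => b ^ 2 * b' ^ 2 * (Real.exp (-2 * s * R) *
      ((Set.Icc 0 R).indicator (fun _ : ℝ => (1:ℝ)) x + Real.exp (-(4 * s) * |x|)
        + Real.exp (-(4 * s) * |x - R|)))) :=
    (((hind.add hI).add hI').const_mul _).const_mul _
  have hle : ∀ x, (w₁ x) ^ 2 * (w₂ (x - R)) ^ 2 ≤ b ^ 2 * b' ^ 2 * (Real.exp (-2 * s * R) *
      ((Set.Icc 0 R).indicator (fun _ : ℝ => (1:ℝ)) x + Real.exp (-(4 * s) * |x|)
        + Real.exp (-(4 * s) * |x - R|))) := fun x =>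
    (hup x).trans (mul_le_mul_of_nonneg_left (hdom x) (by positivity))
  have hFint : Integrable (fun x => (w₁ x) ^ 2 * (w₂ (x - R)) ^ 2) := by
    refine hDint.mono' (by fun_prop) (Filter.Eventually.of_forall fun x => ?_)
    rw [Real.norm_of_nonneg (by positivity)]
    exact hle x
  constructor
  · have e : a ^ 2 * a' ^ 2 * R * Real.exp (-2 * s * R) =
        ∫ x, a ^ 2 * a' ^ 2 * Real.exp (-2 * s * R) *
          (Set.Icc 0 R).indicator (fun _ : ℝ => (1:ℝ)) x := by
      rw [integral_const_mul, hindI]; ring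
    rw [e]
    refine integral_mono (hind.const_mul _) hFint fun x => ?_
    by_cases hx : x ∈ Set.Icc 0 R
    · refine le_trans (le_of_eq ?_) (hlow x)
      simp only [Set.indicator_of_mem hx, mul_one]
      rw [abs_of_nonneg hx.1, abs_of_nonpos (by linarith [hx.2] : x - R ≤ 0)]
      congr 2; ring
    · simp only [Set.indicator_of_notMem hx, mul_zero]
      positivity
  · refine (integral_mono hFint hDint hle).trans ?_
    have hsum : Integrable (fun x => (Set.Icc 0 R).indicator (fun _ : ℝ => (1:ℝ)) x +
      Real.exp (-(4 * s) * |x|)) := hind.add hI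
    rw [integral_const_mul, integral_const_mul, integral_add hsum hI',
      integral_add hind hI, hindI, hKR, ← hK]
    have : R + K + K ≤ (1 + 2 * K) * R := by nlinarith
    calc b ^ 2 * b' ^ 2 * (Real.exp (-2 * s * R) * (R + K + K))
        ≤ b ^ 2 * b' ^ 2 * (Real.exp (-2 * s * R) * ((1 + 2 * K) * R)) := by gcongr
      _ = _ := by ring
end

section
/- Let N = 2 and λ > 0. Let w₁, w₂ : ℝ² → ℝ be continuous functions, each with radial decay of rate √λ. Then there exist constants c, C, R₀ > 0 such that for all R ≥ R₀, c·R^{−1/2}·e^{−2√λ·R} ≤ ∫_{ℝ²} w₁(x)²·w₂(x − R·e₁)² dx ≤ C·R^{−1/2}·e^{−2√λ·R}. -/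
open MeasureTheory Real

/-- A continuous function `w : ℝ² → ℝ` has radial decay of rate `√lam`:
`w` is everywhere positive and there are `M, c, C > 0` with
`c‖x‖^{-1/2} e^{-√lam ‖x‖} ≤ w x ≤ C‖x‖^{-1/2} e^{-√lam ‖x‖}` for `‖x‖ ≥ M`. -/
def HasRadialDecay2D (w : EuclideanSpace ℝ (Fin 2) → ℝ) (lam : ℝ) : Prop :=
  (∀ x, 0 < w x) ∧
  ∃ M c C : ℝ, 0 < M ∧ 0 < c ∧ 0 < C ∧
    ∀ x : EuclideanSpace ℝ (Fin 2), M ≤ ‖x‖ →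
      c * ‖x‖ ^ (-(1 : ℝ) / 2) * Real.exp (-Real.sqrt lam * ‖x‖) ≤ w x ∧
      w x ≤ C * ‖x‖ ^ (-(1 : ℝ) / 2) * Real.exp (-Real.sqrt lam * ‖x‖)


/-- Dominating function for the half plane `t ≤ R/2`. -/
noncomputable def HH (a R t y : ℝ) : ℝ :=
  exp (-(a / 8) * |t|) * exp (-(a / 8) * |y|) +
    (Set.Ioc 0 (R / 2)).indicator (fun t => t⁻¹ * exp (-(a / 3 / t) * y ^ 2)) t

lemma HH_nonneg (a R t y : ℝ) : 0 ≤ HH a R t y := by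
  unfold HH
  refine add_nonneg (by positivity) (Set.indicator_nonneg ?_ _)
  intro t ht
  have := ht.1
  positivity

lemma key_half (a R t y r s : ℝ) (ha : 0 < a) (hR : 0 < R) (hr : 0 ≤ r) (hs : 0 ≤ s)
    (hr2 : r ^ 2 = t ^ 2 + y ^ 2) (hs2 : s ^ 2 = (R - t) ^ 2 + y ^ 2) (ht : t ≤ R / 2) :
    (1 + r)⁻¹ * exp (-a * r) * ((1 + s)⁻¹ * exp (-a * s)) ≤
      2 / R * exp (-a * R) * HH a R t y := by
  have hs1 : R - t ≤ s := abs_le_of_sq_le_sq' (by nlinarith [sq_nonneg y]) hs |>.2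
  have hrt : |t| ≤ r := abs_le_of_sq_le_sq (by nlinarith [sq_nonneg y]) hr
  have hry : |y| ≤ r := abs_le_of_sq_le_sq (by nlinarith [sq_nonneg t]) hr
  have h1 : (1 + s)⁻¹ ≤ 2 / R := by
    rw [← inv_div]
    exact inv_anti₀ (by positivity) (by linarith)
  have hmain : (1 + r)⁻¹ * exp (-a * (r - t)) ≤ HH a R t y := by
    by_cases hc : 0 < t ∧ |y| ≤ t
    · obtain ⟨h0, hy⟩ := hc
      have hmem : t ∈ Set.Ioc 0 (R / 2) := ⟨h0, ht⟩
      unfold HH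
      rw [Set.indicator_of_mem hmem]
      refine le_trans ?_ (le_add_of_nonneg_left (by positivity))
      have htr : t ≤ r := (le_abs_self t).trans hrt
      have hy2 : y ^ 2 ≤ t ^ 2 := sq_le_sq' (by linarith [(abs_le.1 hy).1]) (abs_le.1 hy).2
      have hr3 : r ≤ 2 * t := by nlinarith
      have hle : a / 3 / t * y ^ 2 ≤ a * (r - t) := by
        have : a / 3 / t * y ^ 2 = a * (y ^ 2 / (3 * t)) := by field_simp
        rw [this]
        refine mul_le_mul_of_nonneg_left ?_ ha.le
        rw [div_le_iff₀ (by positivity)]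
        nlinarith
      refine mul_le_mul (inv_anti₀ h0 (by linarith)) (exp_le_exp.2 (by linarith))
        (exp_pos _).le (by positivity)
    · have hq : r / 4 ≤ r - t := by
        rcases le_or_gt t 0 with h0 | h0
        · linarith
        · have hy : t < |y| := by
            by_contra h
            exact hc ⟨h0, not_lt.1 h⟩
          have : t ^ 2 < y ^ 2 := by rw [← sq_abs y]; nlinarith
          nlinarith
      unfold HH
      have hind : 0 ≤ (Set.Ioc 0 (R / 2)).indicator
          (fun t => t⁻¹ * exp (-(a / 3 / t) * y ^ 2)) t := by
        refine Set.indicator_nonneg ?_ _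
        intro t ht
        have := ht.1
        positivity
      refine le_trans ?_ (le_add_of_nonneg_right hind)
      rw [← exp_add]
      have h2 : (1 + r)⁻¹ ≤ 1 := inv_le_one_of_one_le₀ (by linarith)
      calc (1 + r)⁻¹ * exp (-a * (r - t)) ≤ 1 * exp (-a * (r - t)) := by gcongr
        _ ≤ _ := by
          rw [one_mul]
          refine exp_le_exp.2 ?_
          nlinarith
  have h3 : exp (-a * s) ≤ exp (-a * R) * exp (a * t) := by
    rw [← exp_add]
    refine exp_le_exp.2 ?_
    nlinarith
  calc (1 + r)⁻¹ * exp (-a * r) * ((1 + s)⁻¹ * exp (-a * s))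
      ≤ (1 + r)⁻¹ * exp (-a * r) * ((2 / R) * (exp (-a * R) * exp (a * t))) := by gcongr
    _ = 2 / R * exp (-a * R) * ((1 + r)⁻¹ * (exp (-a * r) * exp (a * t))) := by ring
    _ = 2 / R * exp (-a * R) * ((1 + r)⁻¹ * exp (-a * (r - t))) := by
        rw [← exp_add]; congr 3; ring
    _ ≤ _ := by gcongr

lemma key_full (a R t y r s : ℝ) (ha : 0 < a) (hR : 0 < R) (hr : 0 ≤ r) (hs : 0 ≤ s)
    (hr2 : r ^ 2 = t ^ 2 + y ^ 2) (hs2 : s ^ 2 = (R - t) ^ 2 + y ^ 2) :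
    (1 + r)⁻¹ * exp (-a * r) * ((1 + s)⁻¹ * exp (-a * s)) ≤
      2 / R * exp (-a * R) * (HH a R t y + HH a R (R - t) y) := by
  have h1 := HH_nonneg a R t y
  have h2 := HH_nonneg a R (R - t) y
  rcases le_total t (R / 2) with h | h
  · refine (key_half a R t y r s ha hR hr hs hr2 hs2 h).trans ?_
    gcongr
    linarith
  · rw [mul_comm]
    refine (key_half a R (R - t) y s r ha hR hs hr hs2 (by rw [hr2]; ring)
      (by linarith)).trans ?_
    gcongr
    linarith

lemma integrable_exp_abs (d : ℝ) (hd : 0 < d) : Integrable (fun x : ℝ => exp (-d * |x|)) := by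
  have h := (integrable_inv_one_add_sq).comp_mul_left' (R := d / 2) (by positivity)
  refine h.mono' (by fun_prop) (Filter.Eventually.of_forall fun x => ?_)
  rw [Real.norm_of_nonneg (exp_pos _).le, neg_mul, exp_neg]
  refine inv_anti₀ (by positivity) ?_
  have := quadratic_le_exp_of_nonneg (x := d * |x|) (by positivity)
  have h2 : |x| ^ 2 = x ^ 2 := sq_abs x
  have h3 : 0 ≤ d * |x| := by positivity
  nlinarith [mul_pow d (|x|) 2, sq_nonneg (d * |x|)]

lemma measurable_HH (a R : ℝ) : Measurable (fun p : ℝ × ℝ => HH a R p.1 p.2) := by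
  unfold HH
  refine Measurable.add (by fun_prop) ?_
  have : (fun p : ℝ × ℝ => (Set.Ioc 0 (R / 2)).indicator
      (fun t => t⁻¹ * exp (-(a / 3 / t) * p.2 ^ 2)) p.1) =
      ((fun p : ℝ × ℝ => p.1) ⁻¹' (Set.Ioc 0 (R / 2))).indicator
        (fun p : ℝ × ℝ => p.1⁻¹ * exp (-(a / 3 / p.1) * p.2 ^ 2)) := by
    ext p
    simp [Set.indicator]
  rw [this]
  exact Measurable.indicator (by fun_prop) (measurable_fst measurableSet_Ioc)

lemma inner_int (a t : ℝ) (ha : 0 < a) (ht : 0 < t) :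
    ∫⁻ y : ℝ, ENNReal.ofReal (t⁻¹ * exp (-(a / 3 / t) * y ^ 2)) =
      ENNReal.ofReal (√(3 * π / a) * t ^ (-(1 : ℝ) / 2)) := by
  have hi : Integrable (fun y : ℝ => t⁻¹ * exp (-(a / 3 / t) * y ^ 2)) :=
    (integrable_exp_neg_mul_sq (by positivity)).const_mul _
  rw [← ofReal_integral_eq_lintegral_ofReal hi
    (Filter.Eventually.of_forall fun y => by positivity), integral_const_mul, integral_gaussian]
  congr 1
  have h1 : π / (a / 3 / t) = 3 * π / a * t := by field_simp
  rw [h1, sqrt_mul (by positivity), show -(1 : ℝ) / 2 = 1 / 2 - 1 by norm_num, rpow_sub ht,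
    ← sqrt_eq_rpow, rpow_one]
  field_simp

lemma outer_int (K R : ℝ) (hK : 0 ≤ K) (hR : 0 < R) :
    ∫⁻ t in Set.Ioc 0 (R / 2), ENNReal.ofReal (K * t ^ (-(1 : ℝ) / 2)) ≤
      ENNReal.ofReal (2 * K * R ^ ((1 : ℝ) / 2)) := by
  have hi : IntegrableOn (fun t : ℝ => K * t ^ (-(1 : ℝ) / 2)) (Set.Ioc 0 (R / 2)) :=
    ((intervalIntegrable_iff_integrableOn_Ioc_of_le (by positivity)).1
      (intervalIntegral.intervalIntegrable_rpow' (by norm_num))).const_mul _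
  rw [← ofReal_integral_eq_lintegral_ofReal hi]
  · apply ENNReal.ofReal_le_ofReal
    rw [integral_const_mul, ← intervalIntegral.integral_of_le (by positivity),
      integral_rpow (Or.inl (by norm_num))]
    norm_num
    have : (R / 2) ^ ((1 : ℝ) / 2) ≤ R ^ ((1 : ℝ) / 2) :=
      rpow_le_rpow (by positivity) (by linarith) (by norm_num)
    nlinarith
  · rw [Filter.EventuallyLE, ae_restrict_iff' measurableSet_Ioc]
    refine Filter.Eventually.of_forall fun t ht => ?_
    have := ht.1
    positivity

lemma lint_HH (a : ℝ) (ha : 0 < a) : ∃ K : ℝ, 0 < K ∧ ∀ R : ℝ, 1 ≤ R →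
    ∫⁻ p : ℝ × ℝ, ENNReal.ofReal (HH a R p.1 p.2) ≤ ENNReal.ofReal (K * R ^ ((1 : ℝ) / 2)) := by
  have hi : Integrable (fun p : ℝ × ℝ => exp (-(a / 8) * |p.1|) * exp (-(a / 8) * |p.2|)) :=
    (integrable_exp_abs (a / 8) (by positivity)).mul_prod
      (integrable_exp_abs (a / 8) (by positivity))
  set D := ∫ p : ℝ × ℝ, exp (-(a / 8) * |p.1|) * exp (-(a / 8) * |p.2|) with hD
  have hD0 : 0 ≤ D := integral_nonneg fun p => by positivity
  refine ⟨D + 1 + 2 * √(3 * π / a), by positivity, fun R hR => ?_⟩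
  have hR0 : 0 < R := by linarith
  have hmeas : Measurable (fun p : ℝ × ℝ => exp (-(a / 8) * |p.1|) * exp (-(a / 8) * |p.2|)) := by
    fun_prop
  have hmeas2 : Measurable (fun p : ℝ × ℝ => (Set.Ioc 0 (R / 2)).indicator
      (fun t => t⁻¹ * exp (-(a / 3 / t) * p.2 ^ 2)) p.1) := by
    have := (measurable_HH a R).sub hmeas
    convert this using 1
    ext p
    simp [HH]
  have hR1 : 1 ≤ R ^ ((1 : ℝ) / 2) := one_le_rpow hR (by norm_num)
  calc ∫⁻ p : ℝ × ℝ, ENNReal.ofReal (HH a R p.1 p.2)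
      = ∫⁻ p : ℝ × ℝ, (ENNReal.ofReal (exp (-(a / 8) * |p.1|) * exp (-(a / 8) * |p.2|)) +
          ENNReal.ofReal ((Set.Ioc 0 (R / 2)).indicator
            (fun t => t⁻¹ * exp (-(a / 3 / t) * p.2 ^ 2)) p.1)) := by
        refine lintegral_congr fun p => ?_
        rw [HH, ENNReal.ofReal_add (by positivity)]
        refine Set.indicator_nonneg ?_ _
        intro t ht
        have := ht.1
        positivity
    _ = ENNReal.ofReal D + ∫⁻ p : ℝ × ℝ, ENNReal.ofReal ((Set.Ioc 0 (R / 2)).indicator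
            (fun t => t⁻¹ * exp (-(a / 3 / t) * p.2 ^ 2)) p.1) := by
        rw [lintegral_add_left hmeas.ennreal_ofReal, hD, ofReal_integral_eq_lintegral_ofReal hi
          (Filter.Eventually.of_forall fun y => by positivity)]
    _ ≤ ENNReal.ofReal D + ENNReal.ofReal (2 * √(3 * π / a) * R ^ ((1 : ℝ) / 2)) := by
        gcongr
        rw [Measure.volume_eq_prod, lintegral_prod _ hmeas2.ennreal_ofReal.aemeasurable]
        refine le_trans (le_of_eq ?_) (outer_int (√(3 * π / a)) R (sqrt_nonneg _) hR0)
        rw [← lintegral_indicator measurableSet_Ioc]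
        refine lintegral_congr fun t => ?_
        by_cases ht : t ∈ Set.Ioc 0 (R / 2)
        · simp only [Set.indicator_of_mem ht]
          exact inner_int a t ha ht.1
        · simp only [Set.indicator_of_notMem ht]
          simp
    _ = ENNReal.ofReal (D + 2 * √(3 * π / a) * R ^ ((1 : ℝ) / 2)) := by
        rw [ENNReal.ofReal_add hD0 (by positivity)]
    _ ≤ _ := by
        apply ENNReal.ofReal_le_ofReal
        nlinarith

lemma lint_HH_refl (a R : ℝ) :
    ∫⁻ p : ℝ × ℝ, ENNReal.ofReal (HH a R (R - p.1) p.2) =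
      ∫⁻ p : ℝ × ℝ, ENNReal.ofReal (HH a R p.1 p.2) := by
  have h : Measurable (fun p : ℝ × ℝ => HH a R (R - p.1) p.2) :=
    (measurable_HH a R).comp (by fun_prop : Measurable (fun p : ℝ × ℝ => (R - p.1, p.2)))
  rw [Measure.volume_eq_prod, lintegral_prod _ h.ennreal_ofReal.aemeasurable,
    lintegral_prod _ (measurable_HH a R).ennreal_ofReal.aemeasurable]
  exact lintegral_sub_left_eq_self
    (fun t => ∫⁻ y : ℝ, ENNReal.ofReal (HH a R t y)) R

lemma rpow_half_sq (x : ℝ) (hx : 0 < x) : (x ^ (-(1 : ℝ) / 2)) ^ 2 = x⁻¹ := by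
  rw [← rpow_natCast, ← rpow_mul hx.le]
  norm_num
  exact rpow_neg_one x

lemma sq_form (c s x : ℝ) (hx : 0 < x) :
    (c * x ^ (-(1 : ℝ) / 2) * exp (-s * x)) ^ 2 = c ^ 2 * (x⁻¹ * exp (-(2 * s) * x)) := by
  rw [mul_pow, mul_pow, rpow_half_sq x hx, ← exp_nat_mul, mul_assoc]
  congr 3
  push_cast
  ring

lemma decay_lower {w : EuclideanSpace ℝ (Fin 2) → ℝ} {lam : ℝ} (h : HasRadialDecay2D w lam) :
    ∃ M k : ℝ, 0 < M ∧ 0 < k ∧ ∀ x, M ≤ ‖x‖ →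
      k * (‖x‖⁻¹ * exp (-(2 * √lam) * ‖x‖)) ≤ w x ^ 2 := by
  obtain ⟨hpos, M, c, C, hM, hc, hC, hb⟩ := h
  refine ⟨M, c ^ 2, hM, by positivity, fun x hx => ?_⟩
  rw [← sq_form c _ _ (hM.trans_le hx)]
  exact pow_le_pow_left₀ (by positivity) (hb x hx).1 2

lemma decay_upper {w : EuclideanSpace ℝ (Fin 2) → ℝ} {lam : ℝ} (hw : Continuous w)
    (h : HasRadialDecay2D w lam) :
    ∃ K : ℝ, 0 < K ∧ ∀ x, w x ^ 2 ≤ K * ((1 + ‖x‖)⁻¹ * exp (-(2 * √lam) * ‖x‖)) := by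
  obtain ⟨hpos, M, c, C, hM, hc, hC, hb⟩ := h
  have hcont : Continuous (fun x : EuclideanSpace ℝ (Fin 2) =>
      w x ^ 2 * ((1 + ‖x‖) * exp ((2 * √lam) * ‖x‖))) := by fun_prop
  obtain ⟨B, hB⟩ := (isCompact_closedBall (0 : EuclideanSpace ℝ (Fin 2)) M).bddAbove_image
    hcont.continuousOn
  have hB' : ∀ x : EuclideanSpace ℝ (Fin 2), ‖x‖ ≤ M →
      w x ^ 2 * ((1 + ‖x‖) * exp ((2 * √lam) * ‖x‖)) ≤ B := fun x hx =>
    hB ⟨x, by simpa using hx, rfl⟩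
  refine ⟨max B (C ^ 2 * (1 + 1 / M)), lt_max_of_lt_right (by positivity), fun x => ?_⟩
  have hx0 := norm_nonneg x
  rcases le_total ‖x‖ M with hx | hx
  · have h1 := (hB' x hx).trans (le_max_left B (C ^ 2 * (1 + 1 / M)))
    rw [neg_mul, exp_neg, ← mul_inv, ← div_eq_mul_inv, le_div_iff₀ (by positivity)]
    exact h1
  · have hx1 : 0 < ‖x‖ := hM.trans_le hx
    have h1 : w x ^ 2 ≤ C ^ 2 * (‖x‖⁻¹ * exp (-(2 * √lam) * ‖x‖)) := by
      rw [← sq_form C _ _ hx1]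
      exact pow_le_pow_left₀ (hpos x).le (hb x hx).2 2
    have h2 : ‖x‖⁻¹ ≤ (1 + 1 / M) * (1 + ‖x‖)⁻¹ := by
      rw [← div_eq_mul_inv, le_div_iff₀ (by positivity), inv_mul_le_iff₀ hx1]
      have : 1 ≤ ‖x‖ / M := by rwa [le_div_iff₀ hM, one_mul]
      have h3 : ‖x‖ * (1 + 1 / M) = ‖x‖ + ‖x‖ / M := by ring
      linarith
    calc w x ^ 2 ≤ C ^ 2 * (‖x‖⁻¹ * exp (-(2 * √lam) * ‖x‖)) := h1
      _ ≤ C ^ 2 * (((1 + 1 / M) * (1 + ‖x‖)⁻¹) * exp (-(2 * √lam) * ‖x‖)) := by gcongr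
      _ = (C ^ 2 * (1 + 1 / M)) * ((1 + ‖x‖)⁻¹ * exp (-(2 * √lam) * ‖x‖)) := by ring
      _ ≤ _ := by
        gcongr
        exact le_max_right _ _

lemma exists_coords (e₁ : EuclideanSpace ℝ (Fin 2)) (he₁ : ‖e₁‖ = 1) :
    ∃ T : ℝ × ℝ → EuclideanSpace ℝ (Fin 2), MeasurePreserving T ∧
      (∀ p, ‖T p‖ ^ 2 = p.1 ^ 2 + p.2 ^ 2) ∧
      ∀ p R, ‖T p - R • e₁‖ ^ 2 = (R - p.1) ^ 2 + p.2 ^ 2 := by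
  obtain ⟨b, hb⟩ := Orthonormal.exists_orthonormalBasis_extension_of_card_eq (𝕜 := ℝ)
    (E := EuclideanSpace ℝ (Fin 2)) (ι := Fin 2) (by simp) (v := fun _ => e₁) (s := {0})
    (by
      constructor
      · intro i; exact he₁
      · intro i j hij; exact absurd (Subsingleton.elim i j) hij)
  have hb0 : b 0 = e₁ := hb 0 rfl
  have hn : ∀ x y : ℝ, ‖b.repr.symm (WithLp.toLp 2 ![x, y])‖ ^ 2 = x ^ 2 + y ^ 2 := by
    intro x y
    rw [LinearIsometryEquiv.norm_map, EuclideanSpace.norm_sq_eq]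
    simp
  refine ⟨fun p => b.repr.symm (WithLp.toLp 2 (MeasurableEquiv.finTwoArrow.symm p)),
    b.measurePreserving_repr_symm.comp ((PiLp.volume_preserving_toLp (Fin 2)).comp
      ((volume_preserving_finTwoArrow ℝ).symm _)), fun p => hn p.1 p.2, fun p R => ?_⟩
  have h2 : R • e₁ = b.repr.symm (WithLp.toLp 2 ![R, 0]) := by
    rw [← hb0, ← b.repr_symm_single, ← map_smul]
    congr 1
    ext i
    fin_cases i <;> simp
  rw [h2, ← map_sub]
  have h3 : (WithLp.toLp 2 (MeasurableEquiv.finTwoArrow.symm p) - WithLp.toLp 2 ![R, 0] :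
      EuclideanSpace ℝ (Fin 2)) = WithLp.toLp 2 ![p.1 - R, p.2] := by
    ext i
    fin_cases i <;> simp [MeasurableEquiv.finTwoArrow, MeasurableEquiv.piFinTwo]
  rw [h3, hn]
  ring

lemma low_point (a R t y r s : ℝ) (ha : 0 < a) (hR : 8 ≤ R) (hr : 0 ≤ r) (hs : 0 ≤ s)
    (hr2 : r ^ 2 = t ^ 2 + y ^ 2) (hs2 : s ^ 2 = (R - t) ^ 2 + y ^ 2)
    (ht : t ∈ Set.Icc (R / 4) (R / 2)) (hy : y ∈ Set.Icc (-√R) (√R)) :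
    R / 4 ≤ r ∧ R / 4 ≤ s ∧
    exp (-(3 * a)) * (R⁻¹ * R⁻¹ * exp (-a * R)) ≤
      (r⁻¹ * exp (-a * r)) * (s⁻¹ * exp (-a * s)) := by
  have hy2 : y ^ 2 ≤ R := by
    have := sq_le_sq' hy.1 hy.2
    rwa [sq_sqrt (by linarith)] at this
  obtain ⟨h1, h2⟩ := ht
  have hr1 : t ≤ r := abs_le_of_sq_le_sq' (by nlinarith [sq_nonneg y]) hr |>.2
  have hs1 : R - t ≤ s := abs_le_of_sq_le_sq' (by nlinarith [sq_nonneg y]) hs |>.2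
  have hr3 : r ≤ t + 2 := abs_le_of_sq_le_sq' (by nlinarith) (by linarith) |>.2
  have hs3 : s ≤ R - t + 1 := abs_le_of_sq_le_sq' (by nlinarith) (by linarith) |>.2
  refine ⟨by linarith, by linarith, ?_⟩
  have hr0 : 0 < r := by linarith
  have hs0 : 0 < s := by linarith
  calc exp (-(3 * a)) * (R⁻¹ * R⁻¹ * exp (-a * R))
      = R⁻¹ * R⁻¹ * (exp (-(3 * a)) * exp (-a * R)) := by ring
    _ ≤ r⁻¹ * s⁻¹ * (exp (-a * r) * exp (-a * s)) := by
        rw [← exp_add, ← exp_add]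
        have e1 : R⁻¹ ≤ r⁻¹ := inv_anti₀ hr0 (by linarith)
        have e2 : R⁻¹ ≤ s⁻¹ := inv_anti₀ hs0 (by linarith)
        have e3 : exp (-(3 * a) + -a * R) ≤ exp (-a * r + -a * s) :=
          exp_le_exp.2 (by nlinarith)
        gcongr
    _ = _ := by ring

lemma rpow_aux (R : ℝ) (hR : 0 < R) : R⁻¹ * R ^ ((1 : ℝ) / 2) = R ^ (-(1 : ℝ) / 2) := by
  rw [← rpow_neg_one, ← rpow_add hR]
  norm_num

theorem interaction_estimate_equal_rates_dim_two
    (lam : ℝ) (hlam : 0 < lam)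
    (w₁ w₂ : EuclideanSpace ℝ (Fin 2) → ℝ)
    (hw₁c : Continuous w₁) (hw₂c : Continuous w₂)
    (hw₁ : HasRadialDecay2D w₁ lam) (hw₂ : HasRadialDecay2D w₂ lam)
    (e₁ : EuclideanSpace ℝ (Fin 2)) (he₁ : ‖e₁‖ = 1) :
    ∃ c C R₀ : ℝ, 0 < c ∧ 0 < C ∧ 0 < R₀ ∧
      ∀ R : ℝ, R₀ ≤ R →
        c * R ^ (-(1 : ℝ) / 2) * Real.exp (-2 * Real.sqrt lam * R)
            ≤ (∫ x, (w₁ x) ^ 2 * (w₂ (x - R • e₁)) ^ 2) ∧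
        (∫ x, (w₁ x) ^ 2 * (w₂ (x - R • e₁)) ^ 2)
            ≤ C * R ^ (-(1 : ℝ) / 2) * Real.exp (-2 * Real.sqrt lam * R) := by
  obtain ⟨T, hT, hTn, hTs⟩ := exists_coords e₁ he₁
  obtain ⟨K₁, hK₁, hu₁⟩ := decay_upper hw₁c hw₁
  obtain ⟨K₂, hK₂, hu₂⟩ := decay_upper hw₂c hw₂
  obtain ⟨M₁, k₁, hM₁, hk₁, hl₁⟩ := decay_lower hw₁
  obtain ⟨M₂, k₂, hM₂, hk₂, hl₂⟩ := decay_lower hw₂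
  set a := 2 * √lam with ha_def
  have ha : 0 < a := by positivity
  obtain ⟨K, hK, hH⟩ := lint_HH a ha
  refine ⟨k₁ * k₂ * exp (-(3 * a)) / 2, K₁ * K₂ * 4 * K, 8 + 4 * M₁ + 4 * M₂, by positivity,
    by positivity, by positivity, fun R hR => ?_⟩
  have hR8 : 8 ≤ R := by linarith
  have hR0 : 0 < R := by linarith
  have hexp : -2 * √lam * R = -a * R := by rw [ha_def]; ring
  rw [hexp]
  have hcont : Continuous (fun x : EuclideanSpace ℝ (Fin 2) =>
      (w₁ x) ^ 2 * (w₂ (x - R • e₁)) ^ 2) := by fun_prop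
  rw [integral_eq_lintegral_of_nonneg_ae (Filter.Eventually.of_forall fun x => by positivity)
    hcont.aestronglyMeasurable]
  rw [← hT.lintegral_comp hcont.measurable.ennreal_ofReal]
  have hup : ∫⁻ p, ENNReal.ofReal ((w₁ (T p)) ^ 2 * (w₂ (T p - R • e₁)) ^ 2) ≤
      ENNReal.ofReal (K₁ * K₂ * 4 * K * R ^ (-(1 : ℝ) / 2) * exp (-a * R)) := by
    have hm2 : Measurable (fun p : ℝ × ℝ => HH a R (R - p.1) p.2) :=
      (measurable_HH a R).comp (by fun_prop : Measurable (fun p : ℝ × ℝ => (R - p.1, p.2)))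
    calc ∫⁻ p, ENNReal.ofReal ((w₁ (T p)) ^ 2 * (w₂ (T p - R • e₁)) ^ 2)
        ≤ ∫⁻ p : ℝ × ℝ, ENNReal.ofReal (K₁ * K₂ * (2 / R * exp (-a * R))) *
            (ENNReal.ofReal (HH a R p.1 p.2) + ENNReal.ofReal (HH a R (R - p.1) p.2)) := by
          refine lintegral_mono fun p => ?_
          rw [← ENNReal.ofReal_add (HH_nonneg _ _ _ _) (HH_nonneg _ _ _ _),
            ← ENNReal.ofReal_mul (by positivity)]
          apply ENNReal.ofReal_le_ofReal
          have hk := key_full a R p.1 p.2 ‖T p‖ ‖T p - R • e₁‖ ha hR0 (norm_nonneg _)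
            (norm_nonneg _) (hTn p) (hTs p R)
          calc (w₁ (T p)) ^ 2 * (w₂ (T p - R • e₁)) ^ 2
              ≤ (K₁ * ((1 + ‖T p‖)⁻¹ * exp (-a * ‖T p‖))) *
                (K₂ * ((1 + ‖T p - R • e₁‖)⁻¹ * exp (-a * ‖T p - R • e₁‖))) := by
                gcongr
                · exact hu₁ _
                · exact hu₂ _
            _ = K₁ * K₂ * (((1 + ‖T p‖)⁻¹ * exp (-a * ‖T p‖)) *
                ((1 + ‖T p - R • e₁‖)⁻¹ * exp (-a * ‖T p - R • e₁‖))) := by ring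
            _ ≤ K₁ * K₂ * (2 / R * exp (-a * R) * (HH a R p.1 p.2 + HH a R (R - p.1) p.2)) := by
                gcongr
            _ = _ := by ring
      _ = ENNReal.ofReal (K₁ * K₂ * (2 / R * exp (-a * R))) *
            ((∫⁻ p : ℝ × ℝ, ENNReal.ofReal (HH a R p.1 p.2)) +
              ∫⁻ p : ℝ × ℝ, ENNReal.ofReal (HH a R p.1 p.2)) := by
          rw [lintegral_const_mul _ (by
              exact (measurable_HH a R).ennreal_ofReal.add hm2.ennreal_ofReal),
            lintegral_add_left (measurable_HH a R).ennreal_ofReal, lint_HH_refl]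
      _ ≤ ENNReal.ofReal (K₁ * K₂ * (2 / R * exp (-a * R))) *
            (ENNReal.ofReal (K * R ^ ((1 : ℝ) / 2)) + ENNReal.ofReal (K * R ^ ((1 : ℝ) / 2))) := by
          have := hH R (by linarith)
          gcongr
      _ = _ := by
          rw [← ENNReal.ofReal_add (by positivity) (by positivity),
            ← ENNReal.ofReal_mul (by positivity), ← rpow_aux R hR0]
          congr 1
          ring
  have hlow : ENNReal.ofReal (k₁ * k₂ * exp (-(3 * a)) / 2 * R ^ (-(1 : ℝ) / 2) * exp (-a * R)) ≤
      ∫⁻ p, ENNReal.ofReal ((w₁ (T p)) ^ 2 * (w₂ (T p - R • e₁)) ^ 2) := by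
    set S : Set (ℝ × ℝ) := Set.Icc (R / 4) (R / 2) ×ˢ Set.Icc (-√R) (√R) with hS
    have hSm : MeasurableSet S := measurableSet_Icc.prod measurableSet_Icc
    have hvol : volume S = ENNReal.ofReal (R / 4 * (2 * √R)) := by
      rw [hS, Measure.volume_eq_prod, Measure.prod_prod, Real.volume_Icc, Real.volume_Icc,
        ← ENNReal.ofReal_mul (by linarith)]
      congr 1
      ring
    set q := k₁ * k₂ * (exp (-(3 * a)) * (R⁻¹ * R⁻¹ * exp (-a * R))) with hq
    have hq0 : 0 ≤ q := by positivity
    calc ENNReal.ofReal (k₁ * k₂ * exp (-(3 * a)) / 2 * R ^ (-(1 : ℝ) / 2) * exp (-a * R))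
        = ENNReal.ofReal q * volume S := by
          rw [hvol, ← ENNReal.ofReal_mul hq0, ← rpow_aux R hR0, ← sqrt_eq_rpow]
          congr 1
          rw [hq]
          field_simp
          ring
      _ = ∫⁻ _p in S, ENNReal.ofReal q := by rw [setLIntegral_const]
      _ ≤ ∫⁻ p in S, ENNReal.ofReal ((w₁ (T p)) ^ 2 * (w₂ (T p - R • e₁)) ^ 2) := by
          refine setLIntegral_mono' hSm fun p hp => ?_
          apply ENNReal.ofReal_le_ofReal
          obtain ⟨h1, h2, h3⟩ := low_point a R p.1 p.2 ‖T p‖ ‖T p - R • e₁‖ ha hR8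
            (norm_nonneg _) (norm_nonneg _) (hTn p) (hTs p R) hp.1 hp.2
          calc q ≤ k₁ * k₂ * ((‖T p‖⁻¹ * exp (-a * ‖T p‖)) *
                (‖T p - R • e₁‖⁻¹ * exp (-a * ‖T p - R • e₁‖))) := by
                rw [hq]; gcongr
            _ = (k₁ * (‖T p‖⁻¹ * exp (-a * ‖T p‖))) *
                (k₂ * (‖T p - R • e₁‖⁻¹ * exp (-a * ‖T p - R • e₁‖))) := by ring
            _ ≤ _ := by
                gcongr
                · exact hl₁ _ (by linarith)
                · exact hl₂ _ (by linarith)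
      _ ≤ _ := setLIntegral_le_lintegral _ _
  have hfin : ∫⁻ p, ENNReal.ofReal ((w₁ (T p)) ^ 2 * (w₂ (T p - R • e₁)) ^ 2) ≠ ⊤ :=
    ne_top_of_le_ne_top ENNReal.ofReal_ne_top hup
  exact ⟨(ENNReal.ofReal_le_iff_le_toReal hfin).1 hlow,
    ENNReal.toReal_le_of_le_ofReal (by positivity) hup⟩
end

section
/- Let N ∈ {2,3}, let a > 0, and let e₁ ∈ ℝ^N be a unit vector. Then there exist constants C, R₀ > 0 such that for all R ≥ R₀, ∫_{{x : ‖x‖ > R/2 and ‖x − R·e₁‖ > R/2}} (‖x‖·‖x − R·e₁‖)^{1−N}·e^{−a·(‖x‖ + ‖x − R·e₁‖)} dx ≤ C·R^{1−N}·e^{−a·R}. -/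
open MeasureTheory Real

theorem outer_region_estimate
    (N : ℕ) (hN : N = 2 ∨ N = 3) (a : ℝ) (ha : 0 < a)
    (e₁ : EuclideanSpace ℝ (Fin N)) (he₁ : ‖e₁‖ = 1) :
    ∃ C R₀ : ℝ, 0 < C ∧ 0 < R₀ ∧
      ∀ R : ℝ, R₀ ≤ R →
        (∫ x in {x : EuclideanSpace ℝ (Fin N) | R / 2 < ‖x‖ ∧ R / 2 < ‖x - R • e₁‖},
            (‖x‖ * ‖x - R • e₁‖) ^ ((1 : ℝ) - (N : ℝ)) *
              Real.exp (-a * (‖x‖ + ‖x - R • e₁‖)))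
          ≤ C * R ^ ((1 : ℝ) - (N : ℝ)) * Real.exp (-a * R) := by
  have hN1 : 1 ≤ N := by omega
  have hNr : (1 : ℝ) - N ≤ 0 := by
    have : (1 : ℝ) ≤ N := by exact_mod_cast hN1
    linarith
  have : Nontrivial (EuclideanSpace ℝ (Fin N)) :=
    ⟨⟨e₁, 0, fun h => by simp [h] at he₁⟩⟩
  set B : ℝ := (volume : Measure (EuclideanSpace ℝ (Fin N))).real (Metric.ball 0 1) with hB
  have hB0 : 0 ≤ B := measureReal_nonneg
  refine ⟨(1 / 2 : ℝ) ^ ((1 : ℝ) - N) * (N * B / a) + 1, 1, by positivity, one_pos, ?_⟩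
  intro R hR
  have hR0 : 0 < R := by linarith
  set f : ℝ → ℝ := (Set.Ioi (R / 2)).indicator
    (fun r => r ^ ((1 : ℝ) - N) * Real.exp (-a * r)) with hf
  have hcongr : ∀ y ∈ Set.Ioi (0 : ℝ), y ^ (N - 1) • f y =
      (Set.Ioi (R / 2)).indicator (fun r => Real.exp (-a * r)) y := by
    intro y hy
    have hy : 0 < y := hy
    by_cases h : y ∈ Set.Ioi (R / 2)
    · simp only [hf, Set.indicator_of_mem h, smul_eq_mul]
      rw [← mul_assoc, ← Real.rpow_natCast, ← Real.rpow_add hy]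
      push_cast [Nat.cast_sub hN1]
      simp
    · simp only [hf, Set.indicator_of_notMem h, smul_zero]
  have hsub : Set.Ioi (0 : ℝ) ∩ Set.Ioi (R / 2) = Set.Ioi (R / 2) :=
    Set.inter_eq_right.mpr (Set.Ioi_subset_Ioi (by linarith))
  have hexpint : IntegrableOn (fun r => Real.exp (-a * r)) (Set.Ioi (R / 2)) :=
    integrableOn_exp_mul_Ioi (by linarith) _
  have hint : Integrable (fun x : EuclideanSpace ℝ (Fin N) => f ‖x‖) := by
    rw [integrable_fun_norm_addHaar volume (f := f)]
    rw [integrableOn_congr_fun (g := (Set.Ioi (R / 2)).indicator (fun r => Real.exp (-a * r)))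
      (fun y hy => by simpa only [finrank_euclideanSpace, Fintype.card_fin] using hcongr y hy)
      measurableSet_Ioi]
    exact (hexpint.integrable_indicator measurableSet_Ioi).integrableOn
  have hval : ∫ x : EuclideanSpace ℝ (Fin N), f ‖x‖ = N * B / a * Real.exp (-a * (R / 2)) := by
    rw [integral_fun_norm_addHaar volume f]
    simp only [finrank_euclideanSpace, Fintype.card_fin]
    rw [setIntegral_congr_fun measurableSet_Ioi hcongr, setIntegral_indicator measurableSet_Ioi,
      hsub, integral_exp_mul_Ioi (by linarith)]
    simp only [nsmul_eq_mul, smul_eq_mul, ← hB]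
    field_simp
  set K : ℝ := (R / 2) ^ ((1 : ℝ) - N) * Real.exp (-a * (R / 2)) with hK
  have hf0 : ∀ r, 0 ≤ f r := by
    intro r
    refine Set.indicator_nonneg (fun r hr => ?_) r
    have : 0 < r := lt_trans (by positivity) hr
    positivity
  have hS : MeasurableSet
      {x : EuclideanSpace ℝ (Fin N) | R / 2 < ‖x‖ ∧ R / 2 < ‖x - R • e₁‖} := by
    apply IsOpen.measurableSet
    have h1 : IsOpen {x : EuclideanSpace ℝ (Fin N) | R / 2 < ‖x‖} :=
      isOpen_lt continuous_const continuous_norm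
    have h2 : IsOpen {x : EuclideanSpace ℝ (Fin N) | R / 2 < ‖x - R • e₁‖} :=
      isOpen_lt continuous_const (continuous_id.sub continuous_const).norm
    exact h1.inter h2
  rw [← integral_indicator hS]
  calc _ ≤ ∫ x : EuclideanSpace ℝ (Fin N), K * f ‖x‖ := by
        refine integral_mono_of_nonneg ?_ (hint.const_mul K) ?_
        · refine Filter.Eventually.of_forall fun x => Set.indicator_nonneg (fun x _ => ?_) x
          positivity
        · refine Filter.Eventually.of_forall fun x => ?_
          refine Set.indicator_le' (g := fun x : EuclideanSpace ℝ (Fin N) => K * f ‖x‖)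
            (fun x hx => ?_) (fun x _ => ?_) x
          · obtain ⟨h1, h2⟩ := hx
            have hf1 : f ‖x‖ = ‖x‖ ^ ((1 : ℝ) - N) * Real.exp (-a * ‖x‖) :=
              Set.indicator_of_mem (s := Set.Ioi (R / 2)) h1 _
            rw [hf1, hK, Real.mul_rpow (norm_nonneg _) (norm_nonneg _), mul_add, Real.exp_add]
            have e1 : ‖x - R • e₁‖ ^ ((1 : ℝ) - N) ≤ (R / 2) ^ ((1 : ℝ) - N) :=
              Real.rpow_le_rpow_of_nonpos (by positivity) h2.le hNr
            have e2 : Real.exp (-a * ‖x - R • e₁‖) ≤ Real.exp (-a * (R / 2)) := by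
              apply Real.exp_le_exp.mpr
              nlinarith
            calc _ = (‖x - R • e₁‖ ^ ((1 : ℝ) - N) * Real.exp (-a * ‖x - R • e₁‖)) *
                  (‖x‖ ^ ((1 : ℝ) - N) * Real.exp (-a * ‖x‖)) := by ring
              _ ≤ _ := by gcongr
          · exact mul_nonneg (by positivity) (hf0 _)
    _ = (1 / 2 : ℝ) ^ ((1 : ℝ) - N) * (N * B / a) * R ^ ((1 : ℝ) - N) * Real.exp (-a * R) := by
        rw [integral_const_mul, hval, hK, show R / 2 = (1 / 2) * R by ring,
          Real.mul_rpow (by norm_num) hR0.le,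
          show -a * R = -a * (1 / 2 * R) + -a * (1 / 2 * R) by ring, Real.exp_add]
        ring
    _ ≤ _ := by
        gcongr
        linarith
end

section
/- Let N ∈ {1,2,3}, let λ > 0, let w : ℝ^N → ℝ be a continuous function with radial decay of rate √λ, and let e₁ ∈ ℝ^N be a unit vector. Let M₀ > 0 and let f : ℝ^N → ℝ be measurable, bounded, nonnegative, vanishing outside the ball {‖x‖ ≤ M₀}, and with ∫_{ℝ^N} f > 0. Then there exist constants c, C, R₀ > 0 such that for all R ≥ R₀, c·R^{1−N}·e^{−2√λ·R} ≤ ∫_{ℝ^N} f(x)·w(x − R·e₁)² dx ≤ C·R^{1−N}·e^{−2√λ·R}. -/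
open MeasureTheory Real

theorem compact_bump_interaction_estimate
    (N : ℕ) (hN : N = 1 ∨ N = 2 ∨ N = 3)
    (lam : ℝ) (hlam : 0 < lam)
    (w : EuclideanSpace ℝ (Fin N) → ℝ) (hwc : Continuous w) (hw : HasRadialDecay w lam)
    (e₁ : EuclideanSpace ℝ (Fin N)) (he₁ : ‖e₁‖ = 1)
    (M₀ : ℝ) (hM₀ : 0 < M₀)
    (f : EuclideanSpace ℝ (Fin N) → ℝ) (hfmeas : Measurable f)
    (hfbdd : ∃ B : ℝ, ∀ x, f x ≤ B)
    (hfnonneg : ∀ x, 0 ≤ f x)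
    (hfsupp : ∀ x, M₀ < ‖x‖ → f x = 0)
    (hfpos : 0 < ∫ x, f x) :
    ∃ c C R₀ : ℝ, 0 < c ∧ 0 < C ∧ 0 < R₀ ∧
      ∀ R : ℝ, R₀ ≤ R →
        c * R ^ ((1 : ℝ) - (N : ℝ)) * Real.exp (-2 * Real.sqrt lam * R)
            ≤ (∫ x, f x * (w (x - R • e₁)) ^ 2) ∧
        (∫ x, f x * (w (x - R • e₁)) ^ 2)
            ≤ C * R ^ ((1 : ℝ) - (N : ℝ)) * Real.exp (-2 * Real.sqrt lam * R) := by
  obtain ⟨hwpos, M, c, C, hM, hc, hC, hb⟩ := hw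
  have hfint : Integrable f := by
    by_contra h
    rw [integral_undef h] at hfpos
    exact lt_irrefl _ hfpos
  have hN1 : (1 : ℝ) - N ≤ 0 := by
    rcases hN with h | h | h <;> subst h <;> norm_num
  set s := Real.sqrt lam with hs
  have hs0 : 0 ≤ s := Real.sqrt_nonneg _
  set p : ℝ := 1 - (N : ℝ) with hp
  set a : ℝ := c ^ 2 * (2 : ℝ) ^ p * Real.exp (-2 * s * M₀) with ha
  set A : ℝ := C ^ 2 * (1 / 2 : ℝ) ^ p * Real.exp (2 * s * M₀) with hA
  have ha0 : 0 < a := by positivity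
  have hA0 : 0 < A := by positivity
  refine ⟨a * ∫ x, f x, A * ∫ x, f x, 2 * M₀ + M, by positivity, by positivity, by positivity, ?_⟩
  intro R hR
  have hRpos : 0 < R := by linarith
  set E : ℝ := R ^ p * Real.exp (-2 * s * R) with hE
  have hE0 : 0 < E := by positivity
  have sq_id : ∀ (k r : ℝ), 0 < r →
      (k * r ^ (-((N : ℝ) - 1) / 2) * Real.exp (-s * r)) ^ 2
        = k ^ 2 * r ^ p * Real.exp (-2 * s * r) := by
    intro k r hr
    have h1 : (r ^ (-((N : ℝ) - 1) / 2)) ^ 2 = r ^ p := by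
      rw [← Real.rpow_natCast, ← Real.rpow_mul hr.le]
      congr 1
      rw [hp]
      push_cast
      ring
    have h2 : (Real.exp (-s * r)) ^ 2 = Real.exp (-2 * s * r) := by
      rw [← Real.exp_nat_mul]
      congr 1
      push_cast
      ring
    rw [mul_pow, mul_pow, h1, h2]
  have key : ∀ x : EuclideanSpace ℝ (Fin N), ‖x‖ ≤ M₀ →
      a * E ≤ (w (x - R • e₁)) ^ 2 ∧ (w (x - R • e₁)) ^ 2 ≤ A * E := by
    intro x hx
    have hRe : ‖R • e₁‖ = R := by
      rw [norm_smul, he₁, mul_one, Real.norm_of_nonneg hRpos.le]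
    have hup : ‖x - R • e₁‖ ≤ R + M₀ := by
      have := norm_sub_le x (R • e₁)
      linarith
    have hlo : R - M₀ ≤ ‖x - R • e₁‖ := by
      have := norm_sub_norm_le (R • e₁) x
      rw [norm_sub_rev] at this
      linarith
    obtain ⟨h1, h2⟩ := hb (x - R • e₁) (by linarith)
    have hw0 := hwpos (x - R • e₁)
    generalize ‖x - R • e₁‖ = r at *
    generalize w (x - R • e₁) = v at *
    have hr : 0 < r := by linarith
    constructor
    · have h3 : (c * r ^ (-((N : ℝ) - 1) / 2) * Real.exp (-s * r)) ^ 2 ≤ v ^ 2 :=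
        pow_le_pow_left₀ (by positivity) h1 2
      rw [sq_id c r hr] at h3
      refine le_trans ?_ h3
      have h4 : (2 * R) ^ p ≤ r ^ p := Real.rpow_le_rpow_of_nonpos hr (by linarith) hN1
      have h5 : Real.exp (-2 * s * M₀ + -2 * s * R) ≤ Real.exp (-2 * s * r) := by
        apply Real.exp_le_exp.mpr
        nlinarith
      rw [Real.mul_rpow (by norm_num) hRpos.le] at h4
      rw [Real.exp_add] at h5
      calc a * E = c ^ 2 * ((2 : ℝ) ^ p * R ^ p)
            * (Real.exp (-2 * s * M₀) * Real.exp (-2 * s * R)) := by rw [ha, hE]; ring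
        _ ≤ _ := by gcongr
    · have h3 : v ^ 2 ≤ (C * r ^ (-((N : ℝ) - 1) / 2) * Real.exp (-s * r)) ^ 2 :=
        pow_le_pow_left₀ hw0.le h2 2
      rw [sq_id C r hr] at h3
      refine le_trans h3 ?_
      have h4 : r ^ p ≤ (1 / 2 * R) ^ p :=
        Real.rpow_le_rpow_of_nonpos (by positivity) (by linarith) hN1
      have h5 : Real.exp (-2 * s * r) ≤ Real.exp (2 * s * M₀ + -2 * s * R) := by
        apply Real.exp_le_exp.mpr
        nlinarith
      rw [Real.mul_rpow (by norm_num) hRpos.le] at h4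
      rw [Real.exp_add] at h5
      calc C ^ 2 * r ^ p * Real.exp (-2 * s * r) ≤ C ^ 2 * ((1 / 2 : ℝ) ^ p * R ^ p)
            * (Real.exp (2 * s * M₀) * Real.exp (-2 * s * R)) := by gcongr
        _ = A * E := by rw [hA, hE]; ring
  have key2 : ∀ x, f x * (a * E) ≤ f x * (w (x - R • e₁)) ^ 2 ∧
      f x * (w (x - R • e₁)) ^ 2 ≤ f x * (A * E) := by
    intro x
    by_cases hx : ‖x‖ ≤ M₀
    · obtain ⟨h1, h2⟩ := key x hx
      exact ⟨mul_le_mul_of_nonneg_left h1 (hfnonneg x),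
        mul_le_mul_of_nonneg_left h2 (hfnonneg x)⟩
    · simp [hfsupp x (not_le.mp hx)]
  have hint : Integrable (fun x => f x * (w (x - R • e₁)) ^ 2) := by
    refine (hfint.mul_const (A * E)).mono' ?_ ?_
    · have hc2 : Continuous fun x => (w (x - R • e₁)) ^ 2 := by fun_prop
      exact (hfmeas.mul hc2.measurable).aestronglyMeasurable
    · refine Filter.Eventually.of_forall fun x => ?_
      rw [Real.norm_of_nonneg (mul_nonneg (hfnonneg x) (sq_nonneg _))]
      exact (key2 x).2
  have i1 := integral_mono (hfint.mul_const (a * E)) hint fun x => (key2 x).1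
  have i2 := integral_mono hint (hfint.mul_const (A * E)) fun x => (key2 x).2
  simp only [integral_mul_const] at i1 i2
  constructor
  · refine le_trans (le_of_eq ?_) i1
    rw [hE]; ring
  · refine le_trans i2 (le_of_eq ?_)
    rw [hE]; ring
end

section
/- Let N ≥ 1 and let g, h : [0,∞) → (0,∞) be continuous, strictly decreasing functions for which there exist C, δ > 0 with g(r) ≤ C·e^{−δ·r} and h(r) ≤ C·e^{−δ·r} for all r ≥ 0. Define u(x) = g(‖x‖), v(x) = h(‖x‖), and F(z) = ∫_{ℝ^N} u(x)·v(x + z) dx. Then F(z) < F(0) for every z ∈ ℝ^N with z ≠ 0; in particular F attains its maximum over ℝ^N exactly at z = 0. -/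
open MeasureTheory Real

theorem correlation_strict_max_at_zero
    (N : ℕ) (hN : 1 ≤ N) (g h : ℝ → ℝ)
    (hgc : ContinuousOn g (Set.Ici 0)) (hhc : ContinuousOn h (Set.Ici 0))
    (hgpos : ∀ r : ℝ, 0 ≤ r → 0 < g r) (hhpos : ∀ r : ℝ, 0 ≤ r → 0 < h r)
    (hganti : StrictAntiOn g (Set.Ici 0)) (hhanti : StrictAntiOn h (Set.Ici 0))
    (hdecay : ∃ C δ : ℝ, 0 < C ∧ 0 < δ ∧ ∀ r : ℝ, 0 ≤ r →
      g r ≤ C * Real.exp (-δ * r) ∧ h r ≤ C * Real.exp (-δ * r)) :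
    ∀ z : EuclideanSpace ℝ (Fin N), z ≠ 0 →
      (∫ x : EuclideanSpace ℝ (Fin N), g ‖x‖ * h ‖x + z‖)
        < ∫ x : EuclideanSpace ℝ (Fin N), g ‖x‖ * h ‖x‖ := by
  intro z hz
  obtain ⟨C, δ, hC, hδ, hd⟩ := hdecay
  have : Nonempty (Fin N) := ⟨⟨0, hN⟩⟩
  have : Nontrivial (EuclideanSpace ℝ (Fin N)) := ⟨z, 0, hz⟩
  have hu : Continuous fun x : EuclideanSpace ℝ (Fin N) => g ‖x‖ :=
    hgc.comp_continuous continuous_norm fun x => norm_nonneg x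
  have hv : Continuous fun x : EuclideanSpace ℝ (Fin N) => h ‖x‖ :=
    hhc.comp_continuous continuous_norm fun x => norm_nonneg x
  have huz : Continuous fun x : EuclideanSpace ℝ (Fin N) => g ‖x + z‖ :=
    hu.comp (continuous_id.add continuous_const)
  have hvz : Continuous fun x : EuclideanSpace ℝ (Fin N) => h ‖x + z‖ :=
    hv.comp (continuous_id.add continuous_const)
  have hexp : Integrable fun x : EuclideanSpace ℝ (Fin N) => C * Real.exp (-δ * ‖x‖) := by
    apply Integrable.const_mul
    rw [integrable_fun_norm_addHaar volume (f := fun r => Real.exp (-δ * r))]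
    have := integrableOn_rpow_mul_exp_neg_mul_rpow (s := ((N - 1 : ℕ) : ℝ)) (p := 1) (b := δ)
      (lt_of_lt_of_le (by norm_num) (Nat.cast_nonneg _)) one_pos hδ
    simpa using this
  have hui : Integrable fun x : EuclideanSpace ℝ (Fin N) => g ‖x‖ := by
    refine hexp.mono' hu.aestronglyMeasurable (Filter.Eventually.of_forall fun x => ?_)
    rw [Real.norm_of_nonneg (hgpos _ (norm_nonneg _)).le]
    exact (hd _ (norm_nonneg _)).1
  have hbv : ∀ y : EuclideanSpace ℝ (Fin N), ‖h ‖y‖‖ ≤ h 0 := fun y => by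
    rw [Real.norm_of_nonneg (hhpos _ (norm_nonneg _)).le]
    exact hhanti.antitoneOn (Set.mem_Ici.2 le_rfl) (Set.mem_Ici.2 (norm_nonneg y)) (norm_nonneg y)
  have huzi : Integrable fun x : EuclideanSpace ℝ (Fin N) => g ‖x + z‖ := hui.comp_add_right z
  have i1 : Integrable fun x : EuclideanSpace ℝ (Fin N) => g ‖x‖ * h ‖x‖ :=
    hui.mul_bdd hv.aestronglyMeasurable (Filter.Eventually.of_forall fun x => hbv x)
  have i2 : Integrable fun x : EuclideanSpace ℝ (Fin N) => g ‖x‖ * h ‖x + z‖ :=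
    hui.mul_bdd hvz.aestronglyMeasurable (Filter.Eventually.of_forall fun x => hbv (x + z))
  have i3 : Integrable fun x : EuclideanSpace ℝ (Fin N) => g ‖x + z‖ * h ‖x‖ :=
    huzi.mul_bdd hv.aestronglyMeasurable (Filter.Eventually.of_forall fun x => hbv x)
  have i4 : Integrable fun x : EuclideanSpace ℝ (Fin N) => g ‖x + z‖ * h ‖x + z‖ :=
    i1.comp_add_right z
  have e4 : (∫ x : EuclideanSpace ℝ (Fin N), g ‖x + z‖ * h ‖x + z‖)
      = ∫ x : EuclideanSpace ℝ (Fin N), g ‖x‖ * h ‖x‖ :=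
    integral_add_right_eq_self (fun x : EuclideanSpace ℝ (Fin N) => g ‖x‖ * h ‖x‖) z
  have e3 : (∫ x : EuclideanSpace ℝ (Fin N), g ‖x + z‖ * h ‖x‖)
      = ∫ x : EuclideanSpace ℝ (Fin N), g ‖x‖ * h ‖x + z‖ := by
    rw [← integral_sub_left_eq_self (fun x : EuclideanSpace ℝ (Fin N) => g ‖x‖ * h ‖x + z‖)
      volume (-z)]
    congr 1
    ext x
    rw [show -z - x = -(x + z) by abel, show -(x + z) + z = -x by abel, norm_neg, norm_neg]
  have hpos : 0 < ∫ x : EuclideanSpace ℝ (Fin N),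
      (g ‖x‖ - g ‖x + z‖) * (h ‖x‖ - h ‖x + z‖) := by
    apply integral_pos_of_integrable_nonneg_nonzero (x := 0)
    · exact (hu.sub huz).mul (hv.sub hvz)
    · refine (((i1.sub i2).sub i3).add i4).congr (Filter.Eventually.of_forall fun x => ?_)
      simp only [Pi.add_apply, Pi.sub_apply]
      ring
    · intro x
      rcases le_total ‖x‖ ‖x + z‖ with hx | hx
      · exact mul_nonneg
          (sub_nonneg.2 (hganti.antitoneOn (norm_nonneg x) (norm_nonneg (x + z)) hx))
          (sub_nonneg.2 (hhanti.antitoneOn (norm_nonneg x) (norm_nonneg (x + z)) hx))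
      · exact mul_nonneg_of_nonpos_of_nonpos
          (sub_nonpos.2 (hganti.antitoneOn (norm_nonneg (x + z)) (norm_nonneg x) hx))
          (sub_nonpos.2 (hhanti.antitoneOn (norm_nonneg (x + z)) (norm_nonneg x) hx))
    · have hz' : 0 < ‖z‖ := norm_pos_iff.2 hz
      have h1 := hganti (Set.mem_Ici.2 le_rfl) (Set.mem_Ici.2 hz'.le) hz'
      have h2 := hhanti (Set.mem_Ici.2 le_rfl) (Set.mem_Ici.2 hz'.le) hz'
      simp only [norm_zero, zero_add]
      exact (mul_pos (sub_pos.2 h1) (sub_pos.2 h2)).ne'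
  have hsum : (∫ x : EuclideanSpace ℝ (Fin N),
      (g ‖x‖ - g ‖x + z‖) * (h ‖x‖ - h ‖x + z‖))
      = (∫ x : EuclideanSpace ℝ (Fin N), g ‖x‖ * h ‖x‖)
        - (∫ x : EuclideanSpace ℝ (Fin N), g ‖x‖ * h ‖x + z‖)
        - (∫ x : EuclideanSpace ℝ (Fin N), g ‖x + z‖ * h ‖x‖)
        + ∫ x : EuclideanSpace ℝ (Fin N), g ‖x + z‖ * h ‖x + z‖ := by
    rw [← integral_sub' i1 i2, ← integral_sub' (i1.sub i2) i3,
      ← integral_add' ((i1.sub i2).sub i3) i4]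
    congr 1
    ext x
    simp only [Pi.add_apply, Pi.sub_apply]
    ring
  rw [hsum, e3, e4] at hpos
  linarith
end

section
/- Let N ∈ {1,2,3} and let g, h : [0,∞) → (0,∞) be strictly decreasing functions that are continuously differentiable on (0,∞), and for which there exist C, δ > 0 with g(r) + h(r) + |g'(r)| + |h'(r)| ≤ C·e^{−δ·r} for all r > 0. Define u(x) = g(‖x‖)², v(x) = h(‖x‖)², and F(z) = ∫_{ℝ^N} u(x)·v(x + z) dx. Then F is differentiable at every z ∈ ℝ^N, its gradient is given by ∇F(z) = ∫_{ℝ^N} g(‖x − z‖)²·2·h(‖x‖)·h'(‖x‖)·(x/‖x‖) dx, and ∇F(z) = 0 if and only if z = 0. -/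
open MeasureTheory Real

theorem aux_hasFDerivAt_norm {N : ℕ} (y : EuclideanSpace ℝ (Fin N)) (hy : y ≠ 0) :
    HasFDerivAt (fun x : EuclideanSpace ℝ (Fin N) => ‖x‖) (innerSL ℝ (‖y‖⁻¹ • y)) y := by
  have h1 := (hasStrictFDerivAt_norm_sq y).hasFDerivAt
  have hn : ‖y‖ ≠ 0 := norm_ne_zero_iff.2 hy
  have h2 := h1.sqrt (pow_ne_zero 2 hn)
  have h3 : (fun x : EuclideanSpace ℝ (Fin N) => √(‖x‖ ^ 2)) = fun x => ‖x‖ := by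
    funext x; exact Real.sqrt_sq (norm_nonneg x)
  rw [h3, Real.sqrt_sq (norm_nonneg y)] at h2
  have h4 : innerSL ℝ (‖y‖⁻¹ • y) = (1 / (2 * ‖y‖)) • 2 • innerSL ℝ y := by
    ext v
    simp [inner_smul_left]
    field_simp
  rw [h4]
  exact h2

theorem aux_ae_ne {N : ℕ} (hN : 0 < N) (a : EuclideanSpace ℝ (Fin N)) :
    ∀ᵐ x : EuclideanSpace ℝ (Fin N), x ≠ a := by
  have : Nonempty (Fin N) := ⟨⟨0, hN⟩⟩
  exact Measure.ae_ne volume a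

/-- square of the profile is integrable -/
theorem aux_integrable {N : ℕ} (hN : 0 < N) (g : ℝ → ℝ)
    (hgpos : ∀ r : ℝ, 0 ≤ r → 0 < g r) (hganti : StrictAntiOn g (Set.Ici 0))
    (C δ : ℝ) (hδ : 0 < δ) (hb : ∀ r : ℝ, 0 < r → g r ≤ C * Real.exp (-δ * r)) :
    Integrable (fun x : EuclideanSpace ℝ (Fin N) => (g ‖x‖) ^ 2) := by
  have : Nonempty (Fin N) := ⟨⟨0, hN⟩⟩
  have hm : Measurable (fun r : ℝ => g (max r 0)) := by
    apply Antitone.measurable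
    intro a b hab
    exact hganti.antitoneOn (Set.mem_Ici.2 (le_max_right _ _)) (Set.mem_Ici.2 (le_max_right _ _))
      (max_le_max_right 0 hab)
  have hm2 : Measurable (fun x : EuclideanSpace ℝ (Fin N) => (g ‖x‖) ^ 2) := by
    have h1 : Measurable (fun x : EuclideanSpace ℝ (Fin N) => g (max ‖x‖ 0)) :=
      hm.comp measurable_norm
    have h2 : (fun x : EuclideanSpace ℝ (Fin N) => g (max ‖x‖ 0)) = fun x => g ‖x‖ := by
      funext x; rw [max_eq_left (norm_nonneg x)]
    rw [h2] at h1
    exact h1.pow_const 2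
  have hexp : Integrable (fun x : EuclideanSpace ℝ (Fin N) =>
      (fun r : ℝ => C ^ 2 * Real.exp (-(2 * δ) * r)) ‖x‖) := by
    rw [integrable_fun_norm_addHaar (volume : Measure (EuclideanSpace ℝ (Fin N)))
      (f := fun r : ℝ => C ^ 2 * Real.exp (-(2 * δ) * r))]
    have h1 := (integrableOn_rpow_mul_exp_neg_mul_rpow (p := 1) (b := 2 * δ)
      (s := ((Module.finrank ℝ (EuclideanSpace ℝ (Fin N)) - 1 : ℕ) : ℝ))
      (lt_of_lt_of_le (by norm_num) (Nat.cast_nonneg _)) one_pos (by positivity)).const_mul (C ^ 2)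
    refine IntegrableOn.congr_fun h1 ?_ measurableSet_Ioi
    intro r hr
    simp only [Real.rpow_natCast, Real.rpow_one, smul_eq_mul]
    ring
  refine Integrable.mono' hexp hm2.aestronglyMeasurable ?_
  filter_upwards [aux_ae_ne hN 0] with x hx
  have hx' : 0 < ‖x‖ := norm_pos_iff.2 hx
  rw [Real.norm_of_nonneg (sq_nonneg _)]
  calc (g ‖x‖) ^ 2 ≤ (C * Real.exp (-δ * ‖x‖)) ^ 2 :=
        pow_le_pow_left₀ (hgpos _ hx'.le).le (hb _ hx') 2
    _ = C ^ 2 * Real.exp (-(2 * δ) * ‖x‖) := by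
        rw [mul_pow, ← Real.exp_nat_mul]; push_cast; congr 2; ring

theorem aux_field_meas {N : ℕ} (hN : 0 < N) (q : ℝ → ℝ) (hq : ContinuousOn q (Set.Ioi 0)) :
    AEStronglyMeasurable (fun x : EuclideanSpace ℝ (Fin N) => q ‖x‖ • (‖x‖⁻¹ • x)) volume := by
  have : Nonempty (Fin N) := ⟨⟨0, hN⟩⟩
  have hc : ContinuousOn (fun x : EuclideanSpace ℝ (Fin N) => q ‖x‖ • (‖x‖⁻¹ • x)) {0}ᶜ := by
    refine ContinuousOn.smul (hq.comp continuous_norm.continuousOn ?_) ?_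
    · intro x hx
      exact norm_pos_iff.2 hx
    · exact (continuous_norm.continuousOn.inv₀ fun x hx => norm_ne_zero_iff.2 hx).smul
        continuousOn_id
  have := hc.aestronglyMeasurable (μ := volume) (measurableSet_singleton 0).compl
  rwa [restrict_compl_singleton] at this

theorem aux_main {N : ℕ} (hN : 0 < N) (u : EuclideanSpace ℝ (Fin N) → ℝ) (hu : Integrable u)
    (k q : ℝ → ℝ) (B : ℝ) (hB : 0 ≤ B) (hk : ∀ r ∈ Set.Ioi (0 : ℝ), HasDerivAt k (q r) r)
    (hq : ContinuousOn q (Set.Ioi 0)) (hkb : ∀ r ∈ Set.Ioi (0 : ℝ), |k r| ≤ B)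
    (hqb : ∀ r ∈ Set.Ioi (0 : ℝ), |q r| ≤ B) (z : EuclideanSpace ℝ (Fin N)) :
    Integrable (fun x => (u (x - z) * q ‖x‖) • (‖x‖⁻¹ • x)) ∧
    HasGradientAt (fun z' => ∫ x, u x * k ‖x + z'‖)
      (∫ x, (u (x - z) * q ‖x‖) • (‖x‖⁻¹ • x)) z := by
  have hint : Integrable (fun x => (u (x - z) * q ‖x‖) • (‖x‖⁻¹ • x)) := by
    have h1 : Integrable (fun x => u (x - z)) := hu.comp_sub_right z
    have h2 := h1.smul_bdd B (aux_field_meas hN q hq) (by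
      filter_upwards [aux_ae_ne hN 0] with x hx
      have hx' : 0 < ‖x‖ := norm_pos_iff.2 hx
      rw [norm_smul, norm_smul, norm_inv, norm_norm, inv_mul_cancel₀ hx'.ne', mul_one]
      exact hqb _ hx')
    refine h2.congr (Filter.Eventually.of_forall fun x => ?_)
    simp only [mul_smul]
    rfl
  refine ⟨hint, ?_⟩
  -- Lipschitz extension
  obtain ⟨p, hp, hpk⟩ := (Convex.lipschitzOnWith_of_nnnorm_hasDerivWithin_le (C := ⟨B, hB⟩)
    (convex_Ioi (0 : ℝ)) (fun r hr => (hk r hr).hasDerivWithinAt) (fun r hr => hqb r hr)).extend_real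
  have hae : ∀ z' : EuclideanSpace ℝ (Fin N),
      (fun x => u x * k ‖x + z'‖) =ᵐ[volume] (fun x => u x * p ‖x + z'‖) := by
    intro z'
    filter_upwards [aux_ae_ne hN (-z')] with x hx
    have : 0 < ‖x + z'‖ := norm_pos_iff.2 (fun h => hx (eq_neg_of_add_eq_zero_left h))
    rw [hpk this]
  have hF : (fun z' => ∫ x, u x * k ‖x + z'‖) = fun z' => ∫ x, u x * p ‖x + z'‖ := by
    funext z'
    exact integral_congr_ae (hae z')
  have hmeas : ∀ z', AEStronglyMeasurable (fun x => u x * p ‖x + z'‖) volume := by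
    intro z'
    refine hu.aestronglyMeasurable.mul ?_
    exact (hp.continuous.comp (continuous_norm.comp (continuous_id.add continuous_const))).aestronglyMeasurable
  have hcl : ∀ f : EuclideanSpace ℝ (Fin N) → EuclideanSpace ℝ (Fin N),
      Integrable f → (∫ x, innerSL ℝ (f x)) = innerSL ℝ (∫ x, f x) := by
    intro f hf
    exact ((innerSL ℝ : EuclideanSpace ℝ (Fin N) →L[ℝ] _).integral_comp_comm hf)
  have hint2 : Integrable (fun x => (u x * q ‖x + z‖) • (‖x + z‖⁻¹ • (x + z))) := by
    have := hint.comp_add_right z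
    simpa using this
  have hshift : (∫ x, (u (x - z) * q ‖x‖) • (‖x‖⁻¹ • x)) =
      ∫ x, (u x * q ‖x + z‖) • (‖x + z‖⁻¹ • (x + z)) := by
    rw [← integral_add_right_eq_self _ z]
    simp
  rw [hF, hshift, hasGradientAt_iff_hasFDerivAt]
  have key := hasFDerivAt_integral_of_dominated_loc_of_lip (𝕜 := ℝ) (μ := volume)
    (F := fun z' x => u x * p ‖x + z'‖) (x₀ := z) (s := Set.univ)
    (F' := fun x => innerSL ℝ ((u x * q ‖x + z‖) • (‖x + z‖⁻¹ • (x + z))))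
    (bound := fun x => u x * B) Filter.univ_mem (Filter.Eventually.of_forall hmeas)
    ?_ ?_ ?_ (hu.mul_const B) ?_
  · have h2 := key.2
    rw [hcl _ hint2] at h2
    exact h2
  · refine (hu.mul_bdd (c := B) ?_ ?_)
    · exact (hp.continuous.comp (continuous_norm.comp (continuous_id.add continuous_const))).aestronglyMeasurable
    · filter_upwards [aux_ae_ne hN (-z)] with x hx
      have : 0 < ‖x + z‖ := norm_pos_iff.2 (fun h => hx (eq_neg_of_add_eq_zero_left h))
      rw [← hpk this]
      exact hkb _ this
  · exact (innerSL ℝ).continuous.comp_aestronglyMeasurable hint2.aestronglyMeasurable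
  · refine Filter.Eventually.of_forall fun x => ?_
    refine LipschitzOnWith.of_dist_le_mul fun a _ b _ => ?_
    have h1 := hp.dist_le_mul ‖x + a‖ ‖x + b‖
    have h2 : dist ‖x + a‖ ‖x + b‖ ≤ dist a b := by
      rw [Real.dist_eq, dist_eq_norm]
      simpa using abs_norm_sub_norm_le (x + a) (x + b)
    have h3 : dist (p ‖x + a‖) (p ‖x + b‖) ≤ B * dist a b :=
      h1.trans (mul_le_mul_of_nonneg_left h2 hB)
    rw [Real.dist_eq] at h3 ⊢
    rw [← mul_sub, abs_mul, Real.coe_nnabs, abs_mul, abs_of_nonneg hB, mul_assoc]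
    exact mul_le_mul_of_nonneg_left h3 (abs_nonneg _)
  · filter_upwards [aux_ae_ne hN (-z)] with x hx
    have hne : x + z ≠ 0 := fun h => hx (eq_neg_of_add_eq_zero_left h)
    have hpos : 0 < ‖x + z‖ := norm_pos_iff.2 hne
    have hpd : HasDerivAt p (q ‖x + z‖) ‖x + z‖ := by
      refine (hk _ hpos).congr_of_eventuallyEq ?_
      filter_upwards [Ioi_mem_nhds hpos] with r hr
      exact (hpk hr).symm
    have hnd : HasFDerivAt (fun z' => ‖x + z'‖) (innerSL ℝ (‖x + z‖⁻¹ • (x + z))) z := by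
      have := (aux_hasFDerivAt_norm (x + z) hne).comp z ((hasFDerivAt_id z).const_add x)
      exact this
    have h4 := (hpd.comp_hasFDerivAt z hnd).const_mul (u x)
    have h5 : innerSL ℝ ((u x * q ‖x + z‖) • (‖x + z‖⁻¹ • (x + z))) =
        u x • q ‖x + z‖ • innerSL ℝ (‖x + z‖⁻¹ • (x + z)) := by
      rw [map_smul, mul_smul]
    rw [h5]
    exact h4

theorem correlation_gradient_formula_and_critical_point
    (N : ℕ) (hN : N = 1 ∨ N = 2 ∨ N = 3) (g h g' h' : ℝ → ℝ)
    (hgpos : ∀ r : ℝ, 0 ≤ r → 0 < g r) (hhpos : ∀ r : ℝ, 0 ≤ r → 0 < h r)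
    (hganti : StrictAntiOn g (Set.Ici 0)) (hhanti : StrictAntiOn h (Set.Ici 0))
    (hg' : ∀ r ∈ Set.Ioi (0 : ℝ), HasDerivAt g (g' r) r)
    (hh' : ∀ r ∈ Set.Ioi (0 : ℝ), HasDerivAt h (h' r) r)
    (hg'c : ContinuousOn g' (Set.Ioi 0)) (hh'c : ContinuousOn h' (Set.Ioi 0))
    (hdecay : ∃ C δ : ℝ, 0 < C ∧ 0 < δ ∧ ∀ r : ℝ, 0 < r →
      g r + h r + |g' r| + |h' r| ≤ C * Real.exp (-δ * r)) :
    ∀ z : EuclideanSpace ℝ (Fin N),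
      DifferentiableAt ℝ
        (fun z' : EuclideanSpace ℝ (Fin N) =>
          ∫ x : EuclideanSpace ℝ (Fin N), (g ‖x‖) ^ 2 * (h ‖x + z'‖) ^ 2) z ∧
      gradient
          (fun z' : EuclideanSpace ℝ (Fin N) =>
            ∫ x : EuclideanSpace ℝ (Fin N), (g ‖x‖) ^ 2 * (h ‖x + z'‖) ^ 2) z
        = (∫ x : EuclideanSpace ℝ (Fin N),
            ((g ‖x - z‖) ^ 2 * (2 * h ‖x‖ * h' ‖x‖)) • (‖x‖⁻¹ • x)) ∧
      (gradient
          (fun z' : EuclideanSpace ℝ (Fin N) =>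
            ∫ x : EuclideanSpace ℝ (Fin N), (g ‖x‖) ^ 2 * (h ‖x + z'‖) ^ 2) z = 0
        ↔ z = 0) := by
  intro z
  obtain ⟨C, δ, hC, hδ, hd⟩ := hdecay
  have hN0 : 0 < N := by omega
  have hexp1 : ∀ r : ℝ, 0 < r → C * Real.exp (-δ * r) ≤ C := by
    intro r hr
    have : Real.exp (-δ * r) ≤ 1 := Real.exp_le_one_iff.2 (by nlinarith)
    nlinarith
  have hgb : ∀ r : ℝ, 0 < r → g r ≤ C * Real.exp (-δ * r) := by
    intro r hr
    linarith [hd r hr, hhpos r hr.le, abs_nonneg (g' r), abs_nonneg (h' r)]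
  have hhb : ∀ r : ℝ, 0 < r → h r ≤ C := by
    intro r hr
    linarith [hd r hr, hgpos r hr.le, abs_nonneg (g' r), abs_nonneg (h' r), hexp1 r hr]
  have hh'b : ∀ r : ℝ, 0 < r → |h' r| ≤ C := by
    intro r hr
    linarith [hd r hr, hgpos r hr.le, hhpos r hr.le, abs_nonneg (g' r), hexp1 r hr]
  have hhc : ContinuousOn h (Set.Ioi 0) := fun r hr => (hh' r hr).continuousAt.continuousWithinAt
  have hu := aux_integrable hN0 g hgpos hganti C δ hδ hgb
  obtain ⟨hint, hgrad⟩ := aux_main hN0 (fun x => (g ‖x‖) ^ 2) hu (fun r => (h r) ^ 2)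
    (fun r => 2 * h r * h' r) (2 * C * C) (by positivity)
    (fun r hr => by
      have := (hh' r hr).pow 2
      simp only [Nat.add_one_sub_one, pow_one, Nat.cast_ofNat] at this
      exact this) ((continuousOn_const.mul hhc).mul hh'c)
    (fun r hr => by
      have h1 := hhb r hr
      have h2 := hhpos r (le_of_lt hr)
      rw [abs_of_nonneg (sq_nonneg _)]
      nlinarith)
    (fun r hr => by
      have h1 := hhb r hr
      have h2 := hhpos r (le_of_lt hr)
      rw [abs_mul, abs_mul, abs_of_pos h2, abs_of_pos (two_pos : (0 : ℝ) < 2)]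
      exact mul_le_mul (by linarith) (hh'b r hr) (abs_nonneg _) (by positivity)) z
  refine ⟨hgrad.hasFDerivAt.differentiableAt, hgrad.gradient, ?_⟩
  rw [hgrad.gradient]
  constructor
  swap
  · rintro rfl
    have h1 := integral_neg_eq_self (fun x : EuclideanSpace ℝ (Fin N) =>
      ((g ‖x - 0‖) ^ 2 * (2 * h ‖x‖ * h' ‖x‖)) • (‖x‖⁻¹ • x)) volume
    simp only [sub_zero, norm_neg, smul_neg, integral_neg] at h1 ⊢
    have h2 := add_eq_zero_iff_eq_neg.2 h1.symm
    rw [← two_smul ℝ] at h2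
    exact (smul_eq_zero.1 h2).resolve_left two_ne_zero
  intro h0
  by_contra hz
  -- sign of the derivative
  have hh'np : ∀ r : ℝ, 0 < r → h' r ≤ 0 := by
    intro r hr
    by_contra! hcon
    have h1 : derivWithin h (Set.Ioi 0) r ≤ 0 :=
      (hhanti.antitoneOn.mono Set.Ioi_subset_Ici_self).derivWithin_nonpos
    rw [(hh' r hr).hasDerivWithinAt.derivWithin (isOpen_Ioi.uniqueDiffWithinAt hr)] at h1
    linarith
  obtain ⟨r, hr, hrn⟩ : ∃ r : ℝ, 0 < r ∧ h' r ≠ 0 := by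
    by_contra! hcon
    obtain ⟨c, hc, hce⟩ := exists_hasDerivAt_eq_slope h h' (one_lt_two : (1 : ℝ) < 2)
      (fun x hx => (hh' x (lt_of_lt_of_le one_pos hx.1)).continuousAt.continuousWithinAt)
      (fun x hx => hh' x (lt_trans one_pos hx.1))
    rw [hcon c (lt_trans one_pos hc.1)] at hce
    norm_num at hce
    have := hhanti (Set.mem_Ici.2 zero_le_one) (Set.mem_Ici.2 zero_le_two) one_lt_two
    linarith
  -- scalar integrand
  set f : EuclideanSpace ℝ (Fin N) → ℝ := fun x =>
    inner ℝ z (((g ‖x - z‖) ^ 2 * (2 * h ‖x‖ * h' ‖x‖)) • (‖x‖⁻¹ • x)) with hf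
  have hfint : Integrable f := hint.const_inner z
  have hf0 : ∫ x, f x = 0 := by
    rw [hf, integral_inner hint, h0, inner_zero_right]
  have hsum : ∫ x, (-(f x + f (-x))) = 0 := by
    rw [integral_neg, integral_add hfint hfint.comp_neg, integral_neg_eq_self, hf0]; simp
  have hform : ∀ x, -(f x + f (-x)) = ((g ‖x - z‖) ^ 2 - (g ‖x + z‖) ^ 2) * inner ℝ z x *
      (2 * h ‖x‖ * (-h' ‖x‖) * ‖x‖⁻¹) := by
    intro x
    have e : ‖-x - z‖ = ‖x + z‖ := by rw [← norm_neg]; congr 1; abel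
    simp only [hf, e, norm_neg, inner_smul_right, inner_neg_right, smul_neg]
    ring
  have hlt : ∀ x, 0 < inner ℝ z x → ‖x - z‖ < ‖x + z‖ := by
    intro x hx
    have h1 := norm_add_sq_real x z
    have h2 := norm_sub_sq_real x z
    rw [real_inner_comm] at h1 h2
    exact lt_of_pow_lt_pow_left₀ 2 (norm_nonneg _) (by linarith)
  have hgsq : ∀ a b : ℝ, 0 ≤ a → a < b → (g b) ^ 2 < (g a) ^ 2 := by
    intro a b ha hab
    exact pow_lt_pow_left₀ (hganti ha (ha.trans hab.le) hab) (hgpos b (ha.trans hab.le)).le two_ne_zero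
  have hprod : ∀ x, 0 ≤ ((g ‖x - z‖) ^ 2 - (g ‖x + z‖) ^ 2) * inner ℝ z x := by
    intro x
    rcases lt_trichotomy (inner ℝ z x) 0 with hx | hx | hx
    · have h1 := hlt (-x) (by rw [inner_neg_right]; linarith)
      have e : ‖-x - z‖ = ‖x + z‖ := by rw [← norm_neg]; congr 1; abel
      have e' : ‖-x + z‖ = ‖x - z‖ := by rw [← norm_neg]; congr 1; abel
      rw [e, e'] at h1
      exact mul_nonneg_of_nonpos_of_nonpos (by linarith [hgsq _ _ (norm_nonneg _) h1]) hx.le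
    · rw [hx, mul_zero]
    · exact mul_nonneg (by linarith [hgsq _ _ (norm_nonneg _) (hlt x hx)]) hx.le
  have hnn : ∀ x, 0 ≤ -(f x + f (-x)) := by
    intro x
    rw [hform]
    refine mul_nonneg (hprod x) ?_
    rcases eq_or_ne x 0 with rfl | hx
    · simp
    · have hx' : 0 < ‖x‖ := norm_pos_iff.2 hx
      have := hh'np _ hx'
      have := hhpos _ hx'.le
      have : 0 ≤ -h' ‖x‖ := by linarith
      positivity
  have hz0 := (integral_eq_zero_iff_of_nonneg hnn (hfint.add hfint.comp_neg).neg).1 hsum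
  have hzn : 0 < ‖z‖ := norm_pos_iff.2 hz
  -- an open set where the integrand is positive
  have hopen : IsOpen ({x : EuclideanSpace ℝ (Fin N) | ‖x‖ ∈ Set.Ioi (0 : ℝ) ∩ Set.preimage h' {0}ᶜ} ∩
      {x | 0 < inner ℝ z x}) := by
    refine IsOpen.inter ?_ ?_
    · exact (hh'c.isOpen_inter_preimage isOpen_Ioi isOpen_compl_singleton).preimage continuous_norm
    · exact isOpen_lt continuous_const (continuous_const.inner continuous_id)
  have hnorm : ‖(r / ‖z‖) • z‖ = r := by
    rw [norm_smul, Real.norm_of_nonneg (by positivity), div_mul_cancel₀ _ hzn.ne']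
  have hne : ({x : EuclideanSpace ℝ (Fin N) | ‖x‖ ∈ Set.Ioi (0 : ℝ) ∩ Set.preimage h' {0}ᶜ} ∩
      {x | 0 < inner ℝ z x}).Nonempty := by
    refine ⟨(r / ‖z‖) • z, ?_, ?_⟩
    · simp only [Set.mem_ofPred_eq, hnorm]
      exact ⟨hr, hrn⟩
    · simp only [Set.mem_ofPred_eq, inner_smul_right, real_inner_self_eq_norm_sq]
      positivity
  obtain ⟨x, ⟨⟨hx1, hx2⟩, hx3⟩, hx4⟩ : ∃ x, x ∈ ({x : EuclideanSpace ℝ (Fin N) |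
      ‖x‖ ∈ Set.Ioi (0 : ℝ) ∩ Set.preimage h' {0}ᶜ} ∩ {x | 0 < inner ℝ z x}) ∧ -(f x + f (-x)) = 0 := by
    by_contra! hcon
    refine (hopen.measure_pos volume hne).ne' (measure_mono_null ?_ (ae_iff.1 hz0))
    intro x hx
    exact hcon x hx
  rw [hform] at hx4
  have hx1' : 0 < ‖x‖ := hx1
  have p1 : 0 < (g ‖x - z‖) ^ 2 - (g ‖x + z‖) ^ 2 := by
    linarith [hgsq _ _ (norm_nonneg _) (hlt x hx3)]
  have p2 : 0 < -h' ‖x‖ := by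
    have h5 : h' ‖x‖ ≠ 0 := hx2
    have := lt_of_le_of_ne (hh'np _ hx1') h5
    linarith
  have p3 := hhpos _ hx1'.le
  have p4 : 0 < inner ℝ z x := hx3
  have : 0 < ((g ‖x - z‖) ^ 2 - (g ‖x + z‖) ^ 2) * inner ℝ z x *
      (2 * h ‖x‖ * (-h' ‖x‖) * ‖x‖⁻¹) := by positivity
  linarith
end

section
/- Let N ∈ {1,2,3} and λ, μ > 0. Let w : ℝ^N → ℝ be a positive, twice continuously differentiable function satisfying −Δw(x) + λ·w(x) = μ·w(x)³ for all x ∈ ℝ^N, where Δw denotes the Laplacian (the sum of the second partial derivatives), and suppose there exist C, δ > 0 such that w(x) + ‖fderiv ℝ w x‖ + ‖iteratedFDeriv ℝ 2 w x‖ ≤ C·e^{−δ·‖x‖} for all x. Then the Pohozaev identity λ·∫_{ℝ^N} w(x)² dx = ((4 − N)/4)·μ·∫_{ℝ^N} w(x)⁴ dx holds. -/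
open MeasureTheory Real

/-- The Laplacian of `w : ℝ^N → ℝ`: the sum of the second partial derivatives
with respect to the standard orthonormal basis. -/
noncomputable def lap {N : ℕ} (w : EuclideanSpace ℝ (Fin N) → ℝ)
    (x : EuclideanSpace ℝ (Fin N)) : ℝ :=
  ∑ i : Fin N,
    iteratedFDeriv ℝ 2 w x ![EuclideanSpace.single i (1 : ℝ), EuclideanSpace.single i (1 : ℝ)]

/-- Continuous functions with exponential decay. -/
def PDec {N : ℕ} (f : EuclideanSpace ℝ (Fin N) → ℝ) : Prop :=
  Continuous f ∧ ∃ K d : ℝ, 0 ≤ K ∧ 0 < d ∧ ∀ x, |f x| ≤ K * Real.exp (-d * ‖x‖)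

namespace PDec

variable {N : ℕ} {f g : EuclideanSpace ℝ (Fin N) → ℝ}

lemma add (hf : PDec f) (hg : PDec g) : PDec (fun x => f x + g x) := by
  obtain ⟨cf, K, d, hK, hd, hb⟩ := hf
  obtain ⟨cg, K', d', hK', hd', hb'⟩ := hg
  refine ⟨cf.add cg, K + K', min d d', by positivity, lt_min hd hd', fun x => ?_⟩
  have h1 : Real.exp (-d * ‖x‖) ≤ Real.exp (-(min d d') * ‖x‖) := by
    apply Real.exp_le_exp.2
    nlinarith [norm_nonneg x, min_le_left d d']
  have h2 : Real.exp (-d' * ‖x‖) ≤ Real.exp (-(min d d') * ‖x‖) := by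
    apply Real.exp_le_exp.2
    nlinarith [norm_nonneg x, min_le_right d d']
  calc |f x + g x| ≤ |f x| + |g x| := abs_add_le _ _
    _ ≤ K * Real.exp (-d * ‖x‖) + K' * Real.exp (-d' * ‖x‖) := add_le_add (hb x) (hb' x)
    _ ≤ K * Real.exp (-(min d d') * ‖x‖) + K' * Real.exp (-(min d d') * ‖x‖) := by gcongr
    _ = _ := by ring

lemma mul (hf : PDec f) (hg : PDec g) : PDec (fun x => f x * g x) := by
  obtain ⟨cf, K, d, hK, hd, hb⟩ := hf
  obtain ⟨cg, K', d', hK', hd', hb'⟩ := hg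
  refine ⟨cf.mul cg, K * K', d + d', by positivity, by positivity, fun x => ?_⟩
  rw [abs_mul]
  calc |f x| * |g x| ≤ (K * Real.exp (-d * ‖x‖)) * (K' * Real.exp (-d' * ‖x‖)) :=
        mul_le_mul (hb x) (hb' x) (abs_nonneg _) (by positivity)
    _ = K * K' * (Real.exp (-d * ‖x‖) * Real.exp (-d' * ‖x‖)) := by ring
    _ = _ := by rw [← Real.exp_add]; congr 2; ring

lemma const_mul (c : ℝ) (hf : PDec f) : PDec (fun x => c * f x) := by
  obtain ⟨cf, K, d, hK, hd, hb⟩ := hf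
  refine ⟨cf.const_mul c, |c| * K, d, by positivity, hd, fun x => ?_⟩
  rw [abs_mul, mul_assoc]
  exact mul_le_mul_of_nonneg_left (hb x) (abs_nonneg _)

lemma coord_mul (i : Fin N) (hf : PDec f) : PDec (fun x => x i * f x) := by
  obtain ⟨cf, K, d, hK, hd, hb⟩ := hf
  refine ⟨by fun_prop, 2 / d * K, d / 2, by positivity, by positivity, fun x => ?_⟩
  have h1 : |x i| ≤ ‖x‖ := by simpa using PiLp.norm_apply_le x i
  have h2 : ‖x‖ ≤ 2 / d * Real.exp (d / 2 * ‖x‖) := by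
    have := Real.add_one_le_exp (d / 2 * ‖x‖)
    calc ‖x‖ = 2 / d * (d / 2 * ‖x‖) := by field_simp
      _ ≤ _ := by gcongr; linarith
  rw [abs_mul]
  calc |x i| * |f x| ≤ (2 / d * Real.exp (d / 2 * ‖x‖)) * (K * Real.exp (-d * ‖x‖)) :=
        mul_le_mul (h1.trans h2) (hb x) (abs_nonneg _) (by positivity)
    _ = 2 / d * K * (Real.exp (d / 2 * ‖x‖) * Real.exp (-d * ‖x‖)) := by ring
    _ = _ := by rw [← Real.exp_add]; congr 2; ring

lemma zero : PDec (fun _ : EuclideanSpace ℝ (Fin N) => (0 : ℝ)) :=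
  ⟨continuous_const, 0, 1, le_rfl, one_pos, fun x => by simp⟩

lemma sum {ι : Type*} (s : Finset ι) {F : ι → EuclideanSpace ℝ (Fin N) → ℝ}
    (h : ∀ i, PDec (F i)) : PDec (fun x => ∑ i ∈ s, F i x) := by
  classical
  induction s using Finset.induction_on with
  | empty => simpa using zero
  | insert a s ha ih =>
    simp only [Finset.sum_insert ha]
    exact (h a).add ih

lemma integrable (hf : PDec f) : Integrable f := by
  obtain ⟨cf, K, d, hK, hd, hb⟩ := hf
  have hI := integrable_one_add_norm (E := EuclideanSpace ℝ (Fin N)) (μ := volume)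
    (r := ((N + 1 : ℕ) : ℝ)) (by simp)
  refine Integrable.mono' (hI.const_mul (K * (Real.exp d * (N + 1).factorial / d ^ (N + 1))))
    cf.aestronglyMeasurable (Filter.Eventually.of_forall fun x => ?_)
  rw [Real.norm_eq_abs, mul_assoc]
  refine (hb x).trans (mul_le_mul_of_nonneg_left ?_ hK)
  have hx : 0 ≤ ‖x‖ := norm_nonneg x
  have h1 := Real.pow_div_factorial_le_exp (d * (1 + ‖x‖)) (by positivity) (N + 1)
  rw [Real.rpow_neg (by positivity), Real.rpow_natCast]
  have h2 : Real.exp (-d * ‖x‖) = Real.exp d * (Real.exp (d * (1 + ‖x‖)))⁻¹ := by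
    rw [← Real.exp_neg, ← Real.exp_add]; congr 1; ring
  rw [h2]
  have h3 : (Real.exp (d * (1 + ‖x‖)))⁻¹ ≤ ((d * (1 + ‖x‖)) ^ (N + 1) / (N + 1).factorial)⁻¹ :=
    inv_anti₀ (by positivity) h1
  calc _ ≤ Real.exp d * ((d * (1 + ‖x‖)) ^ (N + 1) / (N + 1).factorial)⁻¹ := by gcongr
    _ = _ := by rw [mul_pow]; field_simp

lemma integral_lineDeriv (hf : PDec f) (hg : PDec g) (v : EuclideanSpace ℝ (Fin N))
    (h : ∀ x, HasLineDerivAt ℝ f (g x) x v) : ∫ x, g x = 0 := by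
  have := integral_bilinear_hasLineDerivAt_right_eq_neg_left_of_integrable
    (μ := (volume : Measure (EuclideanSpace ℝ (Fin N)))) (f := fun _ => (1 : ℝ))
    (f' := fun _ => (0 : ℝ)) (g := f) (g' := g) (v := v) (B := ContinuousLinearMap.mul ℝ ℝ)
    (by simp) (by simpa using hg.integrable) (by simpa using hf.integrable)
    (fun x _ => by simpa [HasLineDerivAt] using hasDerivAt_const (0 : ℝ) (1 : ℝ))
    (fun x _ => h x)
  simpa using this

end PDec

section lineDeriv

variable {E : Type*} [NormedAddCommGroup E] [NormedSpace ℝ E] {f g : E → ℝ} {f' g' : ℝ} {x v : E}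

lemma pld_mul (hf : HasLineDerivAt ℝ f f' x v) (hg : HasLineDerivAt ℝ g g' x v) :
    HasLineDerivAt ℝ (fun y => f y * g y) (f' * g x + f x * g') x v := by
  unfold HasLineDerivAt at *
  simpa using hf.fun_mul hg

lemma pld_add (hf : HasLineDerivAt ℝ f f' x v) (hg : HasLineDerivAt ℝ g g' x v) :
    HasLineDerivAt ℝ (fun y => f y + g y) (f' + g') x v := by
  unfold HasLineDerivAt at *
  exact hf.fun_add hg

lemma pld_const_mul (c : ℝ) (hf : HasLineDerivAt ℝ f f' x v) :
    HasLineDerivAt ℝ (fun y => c * f y) (c * f') x v := by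
  unfold HasLineDerivAt at *
  exact hf.const_mul c

lemma pld_sum {ι : Type*} (s : Finset ι) {F : ι → E → ℝ} {F' : ι → ℝ}
    (h : ∀ i, HasLineDerivAt ℝ (F i) (F' i) x v) :
    HasLineDerivAt ℝ (fun y => ∑ i ∈ s, F i y) (∑ i ∈ s, F' i) x v := by
  unfold HasLineDerivAt at *
  exact HasDerivAt.fun_sum fun i _ => h i

end lineDeriv

theorem pohozaev_identity
    (N : ℕ) (hN : N = 1 ∨ N = 2 ∨ N = 3)
    (lam μ : ℝ) (hlam : 0 < lam) (hμ : 0 < μ)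
    (w : EuclideanSpace ℝ (Fin N) → ℝ)
    (hpos : ∀ x, 0 < w x) (hsmooth : ContDiff ℝ 2 w)
    (heq : ∀ x, -lap w x + lam * w x = μ * (w x) ^ 3)
    (hdecay : ∃ C δ : ℝ, 0 < C ∧ 0 < δ ∧ ∀ x,
      w x + ‖fderiv ℝ w x‖ + ‖iteratedFDeriv ℝ 2 w x‖ ≤ C * Real.exp (-δ * ‖x‖)) :
    lam * (∫ x, (w x) ^ 2) = ((4 - (N : ℝ)) / 4) * μ * ∫ x, (w x) ^ 4 := by
  clear hN hlam hμ
  obtain ⟨C, δ, hC, hδ, hb⟩ := hdecay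
  let e : Fin N → EuclideanSpace ℝ (Fin N) := fun i => EuclideanSpace.single i (1 : ℝ)
  have he : ∀ i, ‖e i‖ = 1 := fun i => by simp [e]
  let p : Fin N → EuclideanSpace ℝ (Fin N) → ℝ := fun j x => fderiv ℝ w x (e j)
  let h : Fin N → Fin N → EuclideanSpace ℝ (Fin N) → ℝ :=
    fun i j x => fderiv ℝ (fderiv ℝ w) x (e i) (e j)
  have hC1 : ContDiff ℝ 1 (fderiv ℝ w) := hsmooth.fderiv_right (by norm_num)
  have hC0 : Continuous (fderiv ℝ (fderiv ℝ w)) := hC1.continuous_fderiv (by norm_num)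
  have hsymm : ∀ i j x, h i j x = h j i x := fun i j x =>
    (hsmooth.contDiffAt.isSymmSndFDerivAt (by simp)) (e i) (e j)
  have hlap : ∀ x, lap w x = ∑ i, h i i x := fun x => by
    simp [lap, iteratedFDeriv_two_apply, h, e]
  -- decay
  have dw : PDec w := ⟨hsmooth.continuous, C, δ, hC.le, hδ, fun x => by
    rw [abs_of_pos (hpos x)]
    linarith [hb x, norm_nonneg (fderiv ℝ w x), norm_nonneg (iteratedFDeriv ℝ 2 w x)]⟩
  have dp : ∀ j, PDec (p j) := fun j =>
    ⟨hC1.continuous.clm_apply continuous_const, C, δ, hC.le, hδ, fun x => by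
      have := (fderiv ℝ w x).le_opNorm (e j)
      rw [he, mul_one, Real.norm_eq_abs] at this
      linarith [hb x, hpos x, norm_nonneg (iteratedFDeriv ℝ 2 w x)]⟩
  have dh : ∀ i j, PDec (h i j) := fun i j =>
    ⟨(hC0.clm_apply continuous_const).clm_apply continuous_const, C, δ, hC.le, hδ, fun x => by
      have := (iteratedFDeriv ℝ 2 w x).le_opNorm ![e i, e j]
      simp only [iteratedFDeriv_two_apply, Fin.prod_univ_two, Matrix.cons_val_zero,
        Matrix.cons_val_one, he, mul_one, Real.norm_eq_abs] at this
      linarith [hb x, hpos x, norm_nonneg (fderiv ℝ w x)]⟩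
  -- derivatives
  have Dw : ∀ i x, HasLineDerivAt ℝ w (p i x) x (e i) := fun i x =>
    ((hsmooth.differentiable (by norm_num)) x).hasFDerivAt.hasLineDerivAt (e i)
  have Dp : ∀ i j x, HasLineDerivAt ℝ (p j) (h i j x) x (e i) := fun i j x => by
    have h1 := (((hC1.differentiable (by norm_num)) x).hasFDerivAt.clm_apply
      (hasFDerivAt_const (e j) x)).hasLineDerivAt (e i)
    simpa [h] using h1
  have Dx : ∀ i j x, HasLineDerivAt ℝ (fun y : EuclideanSpace ℝ (Fin N) => y j)
      (if j = i then 1 else 0) x (e i) := fun i j x => by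
    have h1 := ((EuclideanSpace.proj j : EuclideanSpace ℝ (Fin N) →L[ℝ] ℝ).hasFDerivAt
      (x := x)).hasLineDerivAt (e i)
    simpa [e, Pi.single_apply] using h1
  let c : ℝ := (N : ℝ) / 2 - 1
  -- the vector field and its divergence
  have key : ∀ i : Fin N, ∃ G : EuclideanSpace ℝ (Fin N) → ℝ, PDec G ∧ (∫ x, G x = 0) ∧
      ∀ x, G x = (p i x + ∑ j, x j * h i j x) * p i x + (∑ j, x j * p j x) * h i i x
        + c * (p i x * p i x + w x * h i i x)
        + (μ / 4 * (w x) ^ 4 - lam / 2 * (w x) ^ 2 - 1 / 2 * ∑ j, p j x * p j x)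
        + x i * ((μ * (w x) ^ 3 - lam * w x) * p i x - ∑ j, p j x * h i j x) := by
    intro i
    have d1 : PDec (fun x => ∑ j, x j * p j x) := PDec.sum _ fun j => (dp j).coord_mul j
    have d1' : PDec (fun x => p i x + ∑ j, x j * h i j x) :=
      (dp i).add (PDec.sum _ fun j => (dh i j).coord_mul j)
    have D1 : ∀ x, HasLineDerivAt ℝ (fun x => ∑ j, x j * p j x)
        (p i x + ∑ j, x j * h i j x) x (e i) := fun x => by
      have := pld_sum Finset.univ (fun j => pld_mul (Dx i j x) (Dp i j x))
      simpa [Finset.sum_add_distrib] using this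
    have d2 := dw.mul dw
    have d2' := (dp i).mul dw
    have d4 := d2.mul d2
    have dq := (PDec.sum Finset.univ fun j => (dp j).mul (dp j))
    have dq' := (PDec.sum Finset.univ fun j => ((dh i j).mul (dp j)).add ((dp j).mul (dh i j)))
    have D2 := fun x => pld_mul (Dw i x) (Dw i x)
    have d2' := ((dp i).mul dw).add (dw.mul (dp i))
    have D4 := fun x => pld_mul (D2 x) (D2 x)
    have d4' := (d2'.mul d2).add (d2.mul d2')
    have Dq := fun x => pld_sum Finset.univ (fun j => pld_mul (Dp i j x) (Dp i j x))
    have dG := ((d4.const_mul (μ / 4)).add (d2.const_mul (-(lam / 2)))).add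
      (dq.const_mul (-(1 / 2)))
    have dG' := ((d4'.const_mul (μ / 4)).add (d2'.const_mul (-(lam / 2)))).add
      (dq'.const_mul (-(1 / 2)))
    have DG := fun x => pld_add (pld_add (pld_const_mul (μ / 4) (D4 x))
      (pld_const_mul (-(lam / 2)) (D2 x))) (pld_const_mul (-(1 / 2)) (Dq x))
    have dF := ((d1.mul (dp i)).add ((dw.mul (dp i)).const_mul c)).add (dG.coord_mul i)
    have dF' := (((d1'.mul (dp i)).add (d1.mul (dh i i))).add
      ((((dp i).mul (dp i)).add (dw.mul (dh i i))).const_mul c)).add (dG.add (dG'.coord_mul i))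
    refine ⟨_, dF', PDec.integral_lineDeriv dF dF' (e i) fun x => ?_, fun x => ?_⟩
    · have := pld_add (pld_add (pld_mul (D1 x) (Dp i i x))
        (pld_const_mul c (pld_mul (Dw i x) (Dp i i x)))) (pld_mul (Dx i i x) (DG x))
      simpa using this
    · have : ∑ j, (h i j x * p j x + p j x * h i j x) = 2 * ∑ j, p j x * h i j x := by
        rw [Finset.mul_sum]; exact Finset.sum_congr rfl fun j _ => by ring
      simp only [this]
      ring
  choose G dG iG eG using key
  have hdiv : ∀ x, ∑ i, G i x = -lam * (w x) ^ 2 + μ * (1 - (N : ℝ) / 4) * (w x) ^ 4 := by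
    intro x
    have hL : ∑ i, h i i x = lam * w x - μ * (w x) ^ 3 := by
      rw [← hlap]; linarith [heq x]
    have hS : ∑ i, x i * ∑ j, p j x * h i j x = ∑ i, (∑ j, x j * h i j x) * p i x := by
      simp only [Finset.mul_sum, Finset.sum_mul]
      rw [Finset.sum_comm]
      exact Finset.sum_congr rfl fun i _ => Finset.sum_congr rfl fun j _ => by
        rw [hsymm i j]; ring
    have e1 : ∑ i, G i x = ∑ i, p i x * p i x + ∑ i, (∑ j, x j * h i j x) * p i x
        + (∑ j, x j * p j x) * ∑ i, h i i x
        + c * (∑ i, p i x * p i x + w x * ∑ i, h i i x)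
        + N * (μ / 4 * (w x) ^ 4 - lam / 2 * (w x) ^ 2 - 1 / 2 * ∑ j, p j x * p j x)
        + ((μ * (w x) ^ 3 - lam * w x) * ∑ i, x i * p i x
          - ∑ i, x i * ∑ j, p j x * h i j x) := by
      have : ∀ i, G i x = p i x * p i x + (∑ j, x j * h i j x) * p i x
          + (∑ j, x j * p j x) * h i i x
          + (c * (p i x * p i x) + c * w x * h i i x)
          + (μ / 4 * (w x) ^ 4 - lam / 2 * (w x) ^ 2 - 1 / 2 * ∑ j, p j x * p j x)
          + ((μ * (w x) ^ 3 - lam * w x) * (x i * p i x) - x i * ∑ j, p j x * h i j x) :=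
        fun i => by rw [eG]; ring
      simp only [this, Finset.sum_add_distrib, Finset.sum_sub_distrib, ← Finset.mul_sum,
        Finset.sum_const, Finset.card_univ, Fintype.card_fin, nsmul_eq_mul]
      ring
    rw [e1, hS, hL]
    simp only [c]
    ring
  have hzero : ∫ x, ∑ i, G i x = 0 := by
    rw [integral_finsetSum _ fun i _ => (dG i).integrable]
    simp [iG]
  simp only [hdiv] at hzero
  have i2 : Integrable (fun x => (w x) ^ 2) := by
    simpa [pow_two] using (dw.mul dw).integrable
  have i4 : Integrable (fun x => (w x) ^ 4) := by
    have := ((dw.mul dw).mul (dw.mul dw)).integrable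
    exact this.congr (Filter.Eventually.of_forall fun x => by simp only; ring)
  rw [integral_add (i2.const_mul _) (i4.const_mul _), integral_const_mul, integral_const_mul] at hzero
  linear_combination -hzero
end
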